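/- arXiv:2110.06418 — 6 statements merged into one kernel-verified Lean document; each statement's English description precedes it below -/
import Mathlib

section
/- Let A = diag(0, 2) ∈ ℝ^{2×2}. For every symmetric positive definite Q ∈ ℝ^{2×2}, every positive definite R ∈ ℝ^{1×1}, and every discount factor γ ∈ (0,1] with 4γ < 1 (so that √γ·A is stable), there exists a matrix B ∈ ℝ^{2×1} such that the controllability matrix [B, AB] ∈ ℝ^{2×2} is invertible, and yet every controller K ∈ ℝ^{1×2} with spectral radius ρ(A + BK) < 1 satisfies tr(P_{K,γ}) > tr(P_{0,γ}), where 0 denotes the zero controller. In particular, no minimizer of the γ-discounted LQR cost K ↦ tr(P_{K,γ}) is a stabilizing controller for (A,B). -/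
open Matrix

/-- A real square matrix is stable if every complex eigenvalue has modulus `< 1`. -/
def IsStable {n : ℕ} (M : Matrix (Fin n) (Fin n) ℝ) : Prop :=
  ∀ μ ∈ spectrum ℂ (M.map Complex.ofReal), ‖μ‖ < 1

/-- `P_{K,γ} = Σ_t γ^t ((A+BK)^t)ᵀ (Q + KᵀRK) (A+BK)^t`, the solution of the discounted
Lyapunov equation when `√γ (A+BK)` is stable.  Its trace is the `γ`-discounted LQR cost
averaged over initial states on the sphere of radius `√d`. -/
noncomputable def lyapP {d m : ℕ} (A : Matrix (Fin d) (Fin d) ℝ) (B : Matrix (Fin d) (Fin m) ℝ)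
    (Q : Matrix (Fin d) (Fin d) ℝ) (R : Matrix (Fin m) (Fin m) ℝ)
    (K : Matrix (Fin m) (Fin d) ℝ) (γ : ℝ) : Matrix (Fin d) (Fin d) ℝ :=
  ∑' t : ℕ, γ ^ t • (((A + B * K) ^ t)ᵀ * (Q + Kᵀ * R * K) * (A + B * K) ^ t)

section
attribute [local instance] Matrix.linftyOpNormedRing Matrix.linftyOpNormedAlgebra

lemma aux_bound (M : Matrix (Fin 2) (Fin 2) ℂ) (h : ∀ μ ∈ spectrum ℂ M, ‖μ‖ < 1) :
    ∃ C : ℝ, 0 ≤ C ∧ ∀ t i j, ‖(M ^ t) i j‖ ≤ C := by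
  have hs : spectralRadius ℂ M < ((1 : NNReal) : ENNReal) :=
    spectrum.spectralRadius_lt_of_forall_lt M (fun k hk => by
      have := h k hk
      exact_mod_cast this)
  have hT := spectrum.pow_nnnorm_pow_one_div_tendsto_nhds_spectralRadius M
  have hev := hT.eventually (gt_mem_nhds hs)
  obtain ⟨N, hN⟩ := Filter.eventually_atTop.1 hev
  have entry : ∀ (X : Matrix (Fin 2) (Fin 2) ℂ) i j, ‖X i j‖ ≤ ‖X‖ := by
    intro X i j
    rw [Matrix.linfty_opNorm_def]
    have h1 : ‖X i j‖₊ ≤ ∑ k, ‖X i k‖₊ :=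
      Finset.single_le_sum (f := fun k => ‖X i k‖₊) (fun _ _ => zero_le) (Finset.mem_univ j)
    have h2 : ∑ k, ‖X i k‖₊ ≤ Finset.univ.sup fun i => ∑ k, ‖X i k‖₊ :=
      Finset.le_sup (f := fun i => ∑ k, ‖X i k‖₊) (Finset.mem_univ i)
    exact_mod_cast h1.trans h2
  refine ⟨1 + ∑ t ∈ Finset.range (N + 1), ‖M ^ t‖, by positivity, fun t i j => ?_⟩
  refine (entry _ i j).trans ?_
  by_cases ht : t < N + 1
  · have := Finset.single_le_sum (f := fun t => ‖M ^ t‖) (fun _ _ => norm_nonneg _)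
      (Finset.mem_range.2 ht)
    linarith
  · have h1 := hN t (by omega)
    have h2 : (‖M ^ t‖₊ : ENNReal) ≤ 1 := by
      by_contra hc
      push Not at hc
      have : (1 : ENNReal) ≤ (‖M ^ t‖₊ : ENNReal) ^ (1 / t : ℝ) :=
        ENNReal.one_le_rpow hc.le (by have : 0 < t := by omega
                                      positivity)
      exact absurd h1 (not_lt.2 (by simpa using this))
    have h3 : ‖M ^ t‖ ≤ 1 := by exact_mod_cast h2
    have : 0 ≤ ∑ t ∈ Finset.range (N + 1), ‖M ^ t‖ := by positivity
    linarith
end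

lemma aux_summable (M S : Matrix (Fin 2) (Fin 2) ℝ) (h : IsStable M) (γ : ℝ) (h0 : 0 < γ)
    (h1 : γ < 1) : Summable fun t : ℕ => γ ^ t • ((M ^ t)ᵀ * S * M ^ t) := by
  obtain ⟨C, hC, hb⟩ := aux_bound _ h
  have hb' : ∀ t i j, |(M ^ t) i j| ≤ C := by
    intro t i j
    have := hb t i j
    have e : (M.map Complex.ofReal) ^ t = (M ^ t).map Complex.ofReal :=
      (Matrix.map_pow M Complex.ofRealHom t).symm
    rw [e] at this
    simpa using this
  refine Pi.summable.2 fun i => Pi.summable.2 fun j => ?_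
  refine Summable.of_norm_bounded (g := fun t => γ ^ t * ∑ k, ∑ l, C * |S l k| * C)
    ((summable_geometric_of_lt_one h0.le h1).mul_right _) (fun t => ?_)
  rw [Matrix.smul_apply, smul_eq_mul, norm_mul, Real.norm_of_nonneg (by positivity)]
  gcongr
  rw [Matrix.mul_apply]
  refine (norm_sum_le _ _).trans (Finset.sum_le_sum fun k _ => ?_)
  rw [Matrix.mul_apply, Finset.sum_mul]
  refine (norm_sum_le _ _).trans (Finset.sum_le_sum fun l _ => ?_)
  rw [norm_mul, norm_mul, Matrix.transpose_apply]
  simp only [Real.norm_eq_abs]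
  gcongr <;> apply hb'

lemma aux_spec (b : ℝ) (K : Matrix (Fin 1) (Fin 2) ℝ)
    (h : IsStable ((!![0, 0; 0, 2] : Matrix (Fin 2) (Fin 2) ℝ) +
      (Matrix.of fun _ _ => b : Matrix (Fin 2) (Fin 1) ℝ) * K)) :
    1 / 4 < b ^ 2 * K 0 1 ^ 2 := by
  have key : ∀ μ : ℂ, μ ^ 2 - (b * K 0 0 + b * K 0 1 + 2) * μ + 2 * b * K 0 0 = 0 → ‖μ‖ < 1 := by
    intro μ hμ
    apply h
    rw [spectrum.mem_iff, Matrix.isUnit_iff_isUnit_det, isUnit_iff_ne_zero, not_not,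
      Matrix.det_fin_two]
    simp [Matrix.algebraMap_matrix_apply, Matrix.mul_apply]
    linear_combination hμ
  obtain ⟨s, hs⟩ := IsAlgClosed.exists_pow_nat_eq
    ((b * K 0 0 + b * K 0 1 + 2) ^ 2 - 4 * (2 * b * K 0 0) : ℂ) (n := 2) (by norm_num)
  have k1 := key (((b * K 0 0 + b * K 0 1 + 2) + s) / 2) (by linear_combination hs / 4)
  have k2 := key (((b * K 0 0 + b * K 0 1 + 2) - s) / 2) (by linear_combination hs / 4)
  have e : (2 - ((b * K 0 0 + b * K 0 1 + 2) + s) / 2) *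
      (2 - ((b * K 0 0 + b * K 0 1 + 2) - s) / 2) = ((-2 * (b * K 0 1) : ℝ) : ℂ) := by
    push_cast
    linear_combination -hs / 4
  have far : ∀ z : ℂ, ‖z‖ < 1 → 1 < ‖2 - z‖ := by
    intro z hz
    have := norm_sub_norm_le (2 : ℂ) z
    have h2 : ‖(2 : ℂ)‖ = 2 := by simp
    linarith
  have h1 := far _ k1
  have h2 := far _ k2
  have e2 := congrArg norm e
  rw [norm_mul, Complex.norm_real, Real.norm_eq_abs] at e2
  have h3 : 1 < |(-2 * (b * K 0 1) : ℝ)| := by rw [← e2]; nlinarith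
  have h4 := sq_abs (-2 * (b * K 0 1) : ℝ)
  nlinarith

theorem reward_shaping_impossible
    (Q : Matrix (Fin 2) (Fin 2) ℝ) (R : Matrix (Fin 1) (Fin 1) ℝ)
    (hQ : Q.PosDef) (hR : R.PosDef)
    (γ : ℝ) (hγ : γ ∈ Set.Ioc (0 : ℝ) 1) (hγA : 4 * γ < 1) :
    ∃ B : Matrix (Fin 2) (Fin 1) ℝ,
      IsUnit (!![B 0 0, ((!![0, 0; 0, 2] : Matrix (Fin 2) (Fin 2) ℝ) * B) 0 0;
                 B 1 0, ((!![0, 0; 0, 2] : Matrix (Fin 2) (Fin 2) ℝ) * B) 1 0])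
      ∧ ∀ K : Matrix (Fin 1) (Fin 2) ℝ,
          IsStable ((!![0, 0; 0, 2] : Matrix (Fin 2) (Fin 2) ℝ) + B * K) →
          (lyapP !![0, 0; 0, 2] B Q R 0 γ).trace < (lyapP !![0, 0; 0, 2] B Q R K γ).trace := by
  have hr : 0 < R 0 0 := hR.diag_pos
  obtain ⟨c, hc⟩ : ∃ c : ℝ, ∀ B : Matrix (Fin 2) (Fin 1) ℝ,
      (lyapP !![0, 0; 0, 2] B Q R 0 γ).trace = c :=
    ⟨(lyapP !![0, 0; 0, 2] 0 Q R 0 γ).trace, fun B => by simp [lyapP]⟩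
  obtain ⟨b, hb0, hb⟩ : ∃ b : ℝ, b ≠ 0 ∧ b ^ 2 * (4 * (|c| + 1)) = R 0 0 := by
    have hp : 0 < R 0 0 / (4 * (|c| + 1)) := by positivity
    refine ⟨√(R 0 0 / (4 * (|c| + 1))), (Real.sqrt_pos.2 hp).ne', ?_⟩
    rw [Real.sq_sqrt hp.le]
    field_simp
  refine ⟨Matrix.of fun _ _ => b, ?_, fun K hK => ?_⟩
  · rw [Matrix.isUnit_iff_isUnit_det, isUnit_iff_ne_zero, Matrix.det_fin_two]
    simp [Matrix.mul_apply, hb0]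
  rw [hc]
  have hk := aux_spec b K hK
  have hsum := aux_summable _ (Q + Kᵀ * R * K) hK γ hγ.1 (by linarith)
  have hS : (Q + Kᵀ * R * K).PosSemidef := by
    have := hR.posSemidef.conjTranspose_mul_mul_same K
    rw [Matrix.conjTranspose_eq_transpose_of_trivial] at this
    exact hQ.posSemidef.add this
  have hcont : Continuous (Matrix.traceAddMonoidHom (Fin 2) ℝ) :=
    Continuous.matrix_trace continuous_id
  have htr := hsum.hasSum.map (Matrix.traceAddMonoidHom (Fin 2) ℝ) hcont
  have hle := le_hasSum htr 0 (fun t _ => by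
    have := hS.conjTranspose_mul_mul_same
      (((!![0, 0; 0, 2] : Matrix (Fin 2) (Fin 2) ℝ) + (Matrix.of fun _ _ => b) * K) ^ t)
    rw [Matrix.conjTranspose_eq_transpose_of_trivial] at this
    have h2 := this.trace_nonneg
    have h3 : 0 ≤ γ ^ t := pow_nonneg hγ.1.le t
    simp only [Function.comp, Matrix.traceAddMonoidHom_apply, Matrix.trace_smul, smul_eq_mul]
    exact mul_nonneg h3 h2)
  have hQt := hQ.posSemidef.trace_nonneg
  have hz : Q.trace + R 0 0 * (K 0 0 ^ 2 + K 0 1 ^ 2) ≤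
      (lyapP !![0, 0; 0, 2] (Matrix.of fun _ _ => b) Q R K γ).trace := by
    refine le_trans (le_of_eq ?_) hle
    simp [Matrix.trace, Fin.sum_univ_two, Matrix.mul_apply]
    ring
  have : c ≤ |c| := le_abs_self c
  have h0 := mul_nonneg hr.le (sq_nonneg (K 0 0))
  have h5 : |c| + 1 < R 0 0 * K 0 1 ^ 2 := by
    rw [← hb]
    have : 0 ≤ |c| := abs_nonneg c
    nlinarith
  nlinarith
end

section
/- Suppose Q ⪰ I and R is positive semidefinite. The series Σ_{t=0}^∞ γ^t · tr(((A+BK)^t)ᵀ (Q + KᵀRK) (A+BK)^t) converges (i.e. the γ-discounted LQR cost averaged over the sphere is finite) if and only if √γ·(A + BK) is stable, i.e. its spectral radius is strictly less than 1. -/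
open Matrix

section helpers

attribute [local instance] Matrix.linftyOpNormedRing Matrix.linftyOpNormedAlgebra

lemma lqr_entry_le {d : ℕ} (N : Matrix (Fin d) (Fin d) ℂ) (i j : Fin d) : ‖N i j‖ ≤ ‖N‖ := by
  have h : ‖N i j‖₊ ≤ ‖N‖₊ := by
    rw [Matrix.linfty_opNNNorm_def]
    exact (Finset.single_le_sum (f := fun j => ‖N i j‖₊) (fun _ _ => zero_le) (Finset.mem_univ j)).trans
      (Finset.le_sup (f := fun i => ∑ j, ‖N i j‖₊) (Finset.mem_univ i))
  exact_mod_cast h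

lemma lqr_map_pow {d : ℕ} (M : Matrix (Fin d) (Fin d) ℝ) (t : ℕ) :
    (M.map Complex.ofReal) ^ t = (M ^ t).map Complex.ofReal :=
  (Matrix.map_pow M Complex.ofRealHom t).symm

lemma lqr_stable_of_tendsto {d : ℕ} (M : Matrix (Fin d) (Fin d) ℝ)
    (h : ∀ i j, Filter.Tendsto (fun t : ℕ => (M ^ t) i j) Filter.atTop (nhds 0)) :
    IsStable M := by
  intro μ hμ
  have h1 : Filter.Tendsto (fun t : ℕ => (M.map Complex.ofReal) ^ t) Filter.atTop (nhds 0) := by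
    refine tendsto_pi_nhds.2 fun i => tendsto_pi_nhds.2 fun j => ?_
    simp only [lqr_map_pow, Matrix.map_apply]
    have := (Complex.continuous_ofReal.tendsto 0).comp (h i j)
    simpa [Function.comp_def] using this
  have h2 : Filter.Tendsto (fun t : ℕ => ‖(M.map Complex.ofReal) ^ t‖ * ‖(1 : Matrix (Fin d) (Fin d) ℂ)‖)
      Filter.atTop (nhds 0) := by
    have := h1.norm.mul_const ‖(1 : Matrix (Fin d) (Fin d) ℂ)‖
    simpa using this
  have h3 : Filter.Tendsto (fun t : ℕ => ‖μ‖ ^ t) Filter.atTop (nhds 0) := by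
    refine squeeze_zero (fun t => by positivity) (fun t => ?_) h2
    rw [← norm_pow]
    exact spectrum.norm_le_norm_mul_of_mem (spectrum.pow_mem_pow _ t hμ)
  have := tendsto_pow_atTop_nhds_zero_iff.1 h3
  simpa using this

lemma lqr_bound_of_stable {d : ℕ} [Nonempty (Fin d)] (M : Matrix (Fin d) (Fin d) ℝ) (h : IsStable M) :
    ∃ r : ℝ, 0 ≤ r ∧ r < 1 ∧ ∀ᶠ t : ℕ in Filter.atTop, ∀ i j, |(M ^ t) i j| ≤ r ^ t := by
  have h1 : spectralRadius ℂ (M.map Complex.ofReal) < ((1 : NNReal) : ENNReal) :=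
    spectrum.spectralRadius_lt_of_forall_lt _ fun k hk => by
      have := h k hk
      exact_mod_cast this
  obtain ⟨r, hr1, hr2⟩ := ENNReal.lt_iff_exists_nnreal_btwn.1 h1
  refine ⟨r, r.2, by exact_mod_cast hr2, ?_⟩
  have hg := spectrum.pow_nnnorm_pow_one_div_tendsto_nhds_spectralRadius (M.map Complex.ofReal)
  filter_upwards [hg.eventually_lt_const hr1, Filter.eventually_gt_atTop 0] with t ht ht0 i j
  have h2 : (‖(M.map Complex.ofReal) ^ t‖₊ : ENNReal) ≤ (r : ENNReal) ^ t := by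
    have h3 := pow_le_pow_left' ht.le t
    rwa [← ENNReal.rpow_natCast, ← ENNReal.rpow_mul, one_div, inv_mul_cancel₀ (by positivity),
      ENNReal.rpow_one] at h3
  have h4 : ‖(M.map Complex.ofReal) ^ t‖ ≤ (r : ℝ) ^ t := by exact_mod_cast h2
  have h5 := lqr_entry_le ((M.map Complex.ofReal) ^ t) i j
  rw [lqr_map_pow] at h5 h4
  simp only [Matrix.map_apply, Complex.norm_real, Real.norm_eq_abs] at h5
  exact h5.trans h4

end helpers

lemma lqr_term {d : ℕ} (M P : Matrix (Fin d) (Fin d) ℝ) (γ : ℝ) (hγ : 0 ≤ γ) (t : ℕ) :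
    γ ^ t * ((M ^ t)ᵀ * P * M ^ t).trace
      = (((Real.sqrt γ • M) ^ t)ᵀ * P * (Real.sqrt γ • M) ^ t).trace := by
  simp only [smul_pow, Matrix.transpose_smul, Matrix.smul_mul, Matrix.mul_smul, Matrix.trace_smul,
    smul_eq_mul]
  rw [← mul_assoc, ← mul_pow, Real.mul_self_sqrt hγ]

lemma lqr_lower {d : ℕ} (N P : Matrix (Fin d) (Fin d) ℝ) (hP : (P - 1).PosSemidef) (i j : Fin d) :
    (N i j) ^ 2 ≤ (Nᵀ * P * N).trace := by
  have h1 := (hP.conjTranspose_mul_mul_same N).trace_nonneg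
  rw [Matrix.conjTranspose_eq_transpose_of_trivial, Matrix.mul_sub, Matrix.sub_mul, Matrix.trace_sub,
    Matrix.mul_one, sub_nonneg] at h1
  refine le_trans ?_ h1
  simp only [Matrix.trace, Matrix.diag, Matrix.mul_apply, Matrix.transpose_apply, ← sq]
  exact (Finset.single_le_sum (f := fun i => (N i j) ^ 2) (fun _ _ => sq_nonneg _) (Finset.mem_univ i)).trans
    (Finset.single_le_sum (f := fun j => ∑ i, (N i j) ^ 2)
      (fun _ _ => Finset.sum_nonneg fun _ _ => sq_nonneg _) (Finset.mem_univ j))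

lemma lqr_summable {d : ℕ} (M P : Matrix (Fin d) (Fin d) ℝ) (h : IsStable M) :
    Summable (fun t : ℕ => ((M ^ t)ᵀ * P * M ^ t).trace) := by
  rcases isEmpty_or_nonempty (Fin d) with he | he
  · simp [Matrix.trace, summable_zero]
  obtain ⟨r, hr0, hr1, hr⟩ := lqr_bound_of_stable M h
  simp only [Matrix.trace, Matrix.diag, Matrix.mul_apply, Matrix.transpose_apply, Finset.sum_mul]
  refine summable_sum fun i _ => summable_sum fun j _ => summable_sum fun k _ => ?_
  have hs : Summable (fun t : ℕ => |P k j| * (r ^ 2) ^ t) :=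
    (summable_geometric_of_lt_one (by positivity) (by nlinarith)).mul_left _
  refine Summable.of_norm_bounded_eventually_nat hs ?_
  filter_upwards [hr] with t ht
  rw [Real.norm_eq_abs, abs_mul, abs_mul]
  calc |(M ^ t) k i| * |P k j| * |(M ^ t) j i| ≤ r ^ t * |P k j| * r ^ t := by
        gcongr
        · exact ht k i
        · exact ht j i
    _ = |P k j| * (r ^ 2) ^ t := by ring

/-- With `Q ⪰ I` and `R ⪰ 0`, the averaged `γ`-discounted LQR cost
`Σ_t γ^t tr(((A+BK)^t)ᵀ (Q + KᵀRK) (A+BK)^t)` is finite (the series is summable)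
if and only if `√γ·(A + BK)` is stable. -/
theorem lqr_cost_finite_iff_stable {d m : ℕ}
    (A : Matrix (Fin d) (Fin d) ℝ) (B : Matrix (Fin d) (Fin m) ℝ)
    (Q : Matrix (Fin d) (Fin d) ℝ) (R : Matrix (Fin m) (Fin m) ℝ)
    (hQ : (Q - 1).PosSemidef) (hR : R.PosSemidef)
    (K : Matrix (Fin m) (Fin d) ℝ) (γ : ℝ) (hγ : γ ∈ Set.Ioc (0 : ℝ) 1) :
    Summable (fun t : ℕ =>
        γ ^ t * (((A + B * K) ^ t)ᵀ * (Q + Kᵀ * R * K) * (A + B * K) ^ t).trace)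
    ↔ IsStable (Real.sqrt γ • (A + B * K)) := by
  have hP : (Q + Kᵀ * R * K - 1).PosSemidef := by
    have h1 := hR.conjTranspose_mul_mul_same K
    rw [Matrix.conjTranspose_eq_transpose_of_trivial] at h1
    have h2 := hQ.add h1
    rwa [sub_add_eq_add_sub] at h2
  simp only [lqr_term _ _ γ hγ.1.le]
  refine ⟨fun h => lqr_stable_of_tendsto _ fun i j => ?_, fun h => lqr_summable _ _ h⟩
  have h1 : Filter.Tendsto (fun t : ℕ => (((Real.sqrt γ • (A + B * K)) ^ t) i j) ^ 2)
      Filter.atTop (nhds 0) :=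
    squeeze_zero (fun t => sq_nonneg _) (fun t => lqr_lower _ _ hP i j) h.tendsto_atTop_zero
  have h2 := h1.sqrt
  simp only [Real.sqrt_sq_eq_abs, Real.sqrt_zero] at h2
  exact (tendsto_zero_iff_abs_tendsto_zero _).2 h2
end

section
/- Suppose Q + KᵀRK ⪰ I, let γ₁ ∈ (0,1] be such that √γ₁·(A + BK) is stable, and let P₁ be the solution of the Lyapunov equation P₁ = (Q + KᵀRK) + γ₁·(A+BK)ᵀ P₁ (A+BK). Set c := 1/(8‖P₁‖_op⁴) + 1 and γ₂ := c²·γ₁. Then √γ₂·(A + BK) is also stable, and the solution P₂ of the Lyapunov equation P₂ = (Q + KᵀRK) + γ₂·(A+BK)ᵀ P₂ (A+BK) satisfies tr(P₂ − P₁) ≤ tr(P₁). -/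
open Matrix

/-- Euclidean operator norm of a real matrix. -/
noncomputable def opNorm {p q : ℕ} (M : Matrix (Fin p) (Fin q) ℝ) : ℝ :=
  ‖LinearMap.toContinuousLinearMap (Matrix.toEuclideanLin M)‖

open Filter Topology in
theorem aux_pow_tendsto {E : Type*} [NormedRing E] [NormedAlgebra ℂ E] [CompleteSpace E] (a : E)
    (h : spectralRadius ℂ a < 1) : Tendsto (fun n : ℕ => a ^ n) atTop (𝓝 0) := by
  obtain ⟨r, hr1, hr2⟩ := ENNReal.lt_iff_exists_nnreal_btwn.1 h
  have hr2' : (r : ℝ) < 1 := by exact_mod_cast hr2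
  have ht := spectrum.pow_nnnorm_pow_one_div_tendsto_nhds_spectralRadius a
  have hev := ht.eventually_lt_const hr1
  rw [tendsto_zero_iff_norm_tendsto_zero]
  refine squeeze_zero' (Eventually.of_forall fun n => norm_nonneg _) ?_
    (tendsto_pow_atTop_nhds_zero_of_lt_one r.2 hr2')
  filter_upwards [hev, eventually_gt_atTop 0] with n hn hn0
  have hn0' : (0:ℝ) < n := by exact_mod_cast hn0
  have h1 : ((‖a ^ n‖₊ : ENNReal) ^ (1 / n : ℝ)) ^ (n : ℝ) ≤ (r : ENNReal) ^ (n : ℝ) :=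
    ENNReal.rpow_le_rpow hn.le hn0'.le
  rw [← ENNReal.rpow_mul, one_div, inv_mul_cancel₀ hn0'.ne', ENNReal.rpow_one,
    ENNReal.rpow_natCast] at h1
  have h2 : ‖a ^ n‖₊ ≤ r ^ n := by exact_mod_cast h1
  exact_mod_cast h2

open Filter Topology in
theorem aux_stable_pow {d : ℕ} (M : Matrix (Fin d) (Fin d) ℝ) (h : IsStable M)
    (x : Fin d → ℝ) : Tendsto (fun n : ℕ => (M ^ n) *ᵥ x) atTop (𝓝 0) := by
  rcases isEmpty_or_nonempty (Fin d) with he | he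
  · have : ∀ n : ℕ, (M ^ n) *ᵥ x = 0 := fun n => Subsingleton.elim _ _
    simp [this]
  let := Matrix.linftyOpNormedRing (n := Fin d) (α := ℂ)
  let := Matrix.linftyOpNormedAlgebra (n := Fin d) (R := ℂ) (α := ℂ)
  have : CompleteSpace (Matrix (Fin d) (Fin d) ℂ) := FiniteDimensional.complete ℂ _
  have h1 : spectralRadius ℂ (M.map Complex.ofReal) < 1 := by
    have := spectrum.spectralRadius_lt_of_forall_lt (M.map Complex.ofReal) (r := 1)
      (fun k hk => by simpa [← NNReal.coe_lt_coe] using h k hk)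
    simpa using this
  have h2 := aux_pow_tendsto _ h1
  have hmap : ∀ n : ℕ, (M.map Complex.ofReal) ^ n = (M ^ n).map Complex.ofReal := by
    intro n
    exact (map_pow (Complex.ofRealHom.mapMatrix) M n).symm
  have h3 : Tendsto (fun n : ℕ => M ^ n) atTop (𝓝 0) := by
    have h4 : Continuous (fun X : Matrix (Fin d) (Fin d) ℂ => X.map Complex.re) := by
      exact Continuous.matrix_map continuous_id Complex.continuous_re
    have h5 := (h4.tendsto 0).comp h2
    have h6 : ((fun X : Matrix (Fin d) (Fin d) ℂ => X.map Complex.re) ∘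
        fun n : ℕ => (M.map Complex.ofReal) ^ n) = fun n => M ^ n := by
      funext n
      ext i j
      simp only [Function.comp, hmap, Matrix.map_apply, Complex.ofReal_re]
    rw [h6] at h5
    have h7 : (0 : Matrix (Fin d) (Fin d) ℂ).map Complex.re = 0 := by ext; simp
    rw [h7] at h5
    exact h5
  have h8 : Continuous (fun X : Matrix (Fin d) (Fin d) ℝ => X *ᵥ x) :=
    Continuous.matrix_mulVec continuous_id continuous_const
  have h9 := (h8.tendsto 0).comp h3
  rw [Matrix.zero_mulVec] at h9
  exact h9

open Filter Topology in
theorem aux_lyap {d : ℕ} (M X : Matrix (Fin d) (Fin d) ℝ) (h : IsStable M)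
    (hX : ∀ x, (M *ᵥ x) ⬝ᵥ (X *ᵥ (M *ᵥ x)) ≤ x ⬝ᵥ (X *ᵥ x)) (x : Fin d → ℝ) :
    0 ≤ x ⬝ᵥ (X *ᵥ x) := by
  have h1 : ∀ n : ℕ, ((M ^ n) *ᵥ x) ⬝ᵥ (X *ᵥ ((M ^ n) *ᵥ x)) ≤ x ⬝ᵥ (X *ᵥ x) := by
    intro n
    induction n with
    | zero => simp
    | succ n ih =>
      refine le_trans ?_ ih
      rw [pow_succ', ← Matrix.mulVec_mulVec]
      exact hX _
  have h8 : Continuous (fun y : Fin d → ℝ => y ⬝ᵥ (X *ᵥ y)) :=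
    Continuous.dotProduct continuous_id
      (Continuous.matrix_mulVec continuous_const continuous_id)
  have h9 := (h8.tendsto 0).comp (aux_stable_pow M h x)
  simp only [zero_dotProduct] at h9
  exact le_of_tendsto' h9 h1

theorem aux_stable {d : ℕ} (M P : Matrix (Fin d) (Fin d) ℝ)
    (hP0 : ∀ x, 0 ≤ x ⬝ᵥ (P *ᵥ x))
    (hP : ∀ x, x ≠ 0 → (M *ᵥ x) ⬝ᵥ (P *ᵥ (M *ᵥ x)) < x ⬝ᵥ (P *ᵥ x)) : IsStable M := by
  intro μ hμ
  rw [spectrum.mem_iff, Matrix.isUnit_iff_isUnit_det, isUnit_iff_ne_zero, not_not,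
    ← Matrix.exists_mulVec_eq_zero_iff] at hμ
  obtain ⟨v, hv, hv0⟩ := hμ
  rw [Matrix.sub_mulVec, sub_eq_zero, Algebra.algebraMap_eq_smul_one, Matrix.smul_mulVec,
    Matrix.one_mulVec] at hv0
  set a : Fin d → ℝ := fun i => (v i).re with ha
  set b : Fin d → ℝ := fun i => (v i).im with hb
  have hMa : M *ᵥ a = μ.re • a - μ.im • b := by
    funext i
    have := congrArg Complex.re (congrFun hv0 i)
    simpa [Matrix.mulVec, dotProduct, ha, hb] using this.symm
  have hMb : M *ᵥ b = μ.im • a + μ.re • b := by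
    funext i
    have := congrArg Complex.im (congrFun hv0 i)
    simp [Matrix.mulVec, dotProduct] at this
    simp [Matrix.mulVec, dotProduct, ha, hb]
    linarith
  have hab : a ≠ 0 ∨ b ≠ 0 := by
    by_contra hc
    push Not at hc
    apply hv
    funext i
    exact Complex.ext (congrFun hc.1 i) (congrFun hc.2 i)
  have hle : ∀ x, (M *ᵥ x) ⬝ᵥ (P *ᵥ (M *ᵥ x)) ≤ x ⬝ᵥ (P *ᵥ x) := by
    intro x
    by_cases hx : x = 0
    · simp [hx]
    · exact (hP x hx).le
  have hlt : (M *ᵥ a) ⬝ᵥ (P *ᵥ (M *ᵥ a)) + (M *ᵥ b) ⬝ᵥ (P *ᵥ (M *ᵥ b))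
      < a ⬝ᵥ (P *ᵥ a) + b ⬝ᵥ (P *ᵥ b) := by
    rcases hab with h | h
    · linarith [hP a h, hle b]
    · linarith [hP b h, hle a]
  rw [hMa, hMb] at hlt
  simp only [Matrix.mulVec_add, Matrix.mulVec_sub, Matrix.mulVec_smul, dotProduct_add,
    dotProduct_sub, add_dotProduct, sub_dotProduct, smul_dotProduct, dotProduct_smul,
    smul_eq_mul] at hlt
  have h3 : (μ.re ^ 2 + μ.im ^ 2) * (a ⬝ᵥ (P *ᵥ a) + b ⬝ᵥ (P *ᵥ b))
      < a ⬝ᵥ (P *ᵥ a) + b ⬝ᵥ (P *ᵥ b) := by linarith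
  have h4 : μ.re ^ 2 + μ.im ^ 2 < 1 := by
    by_contra hc
    push Not at hc
    nlinarith [hP0 a, hP0 b]
  have h5 : ‖μ‖ ^ 2 < 1 := by
    rw [Complex.sq_norm, Complex.normSq_apply]; nlinarith
  nlinarith [norm_nonneg μ]

theorem aux_opNorm {d : ℕ} (P : Matrix (Fin d) (Fin d) ℝ) (x : Fin d → ℝ) :
    x ⬝ᵥ (P *ᵥ x) ≤ opNorm P * (x ⬝ᵥ x) := by
  have h1 : x ⬝ᵥ (P *ᵥ x) = inner ℝ (WithLp.toLp 2 x)
      (LinearMap.toContinuousLinearMap (Matrix.toEuclideanLin P) (WithLp.toLp 2 x)) := by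
    rw [EuclideanSpace.inner_eq_star_dotProduct]
    simp [dotProduct_comm]
  have h2 : x ⬝ᵥ x = ‖(WithLp.toLp 2 x : EuclideanSpace ℝ (Fin d))‖ ^ 2 := by
    rw [← real_inner_self_eq_norm_sq, EuclideanSpace.inner_eq_star_dotProduct]
    simp
  rw [h1, h2]
  refine (real_inner_le_norm _ _).trans ?_
  have := ContinuousLinearMap.le_opNorm
    (LinearMap.toContinuousLinearMap (Matrix.toEuclideanLin P)) (WithLp.toLp 2 x)
  unfold opNorm
  nlinarith [norm_nonneg (WithLp.toLp 2 x : EuclideanSpace ℝ (Fin d))]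

theorem aux_quad {d : ℕ} (M S P : Matrix (Fin d) (Fin d) ℝ) (g : ℝ) (hg : 0 ≤ g)
    (hP : P = S + g • (Mᵀ * P * M)) (x : Fin d → ℝ) :
    ((Real.sqrt g • M) *ᵥ x) ⬝ᵥ (P *ᵥ ((Real.sqrt g • M) *ᵥ x))
      = x ⬝ᵥ (P *ᵥ x) - x ⬝ᵥ (S *ᵥ x) ∧
    g * ((M *ᵥ x) ⬝ᵥ (P *ᵥ (M *ᵥ x))) = x ⬝ᵥ (P *ᵥ x) - x ⬝ᵥ (S *ᵥ x) := by
  have h1 : x ⬝ᵥ (P *ᵥ x) = x ⬝ᵥ (S *ᵥ x) + g * ((M *ᵥ x) ⬝ᵥ (P *ᵥ (M *ᵥ x))) := by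
    conv_lhs => rw [hP]
    rw [Matrix.add_mulVec, dotProduct_add, Matrix.smul_mulVec, dotProduct_smul, smul_eq_mul,
      ← Matrix.mulVec_mulVec, ← Matrix.mulVec_mulVec, Matrix.dotProduct_mulVec x Mᵀ,
      Matrix.vecMul_transpose]
  refine ⟨?_, by linarith⟩
  simp only [Matrix.smul_mulVec, Matrix.mulVec_smul, smul_dotProduct, dotProduct_smul, smul_eq_mul]
  rw [← mul_assoc, Real.mul_self_sqrt hg]
  linarith

theorem aux_main {d : ℕ} (M S P₁ : Matrix (Fin d) (Fin d) ℝ) (hS : (S - 1).PosSemidef)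
    (γ₁ : ℝ) (hγ₁ : 0 < γ₁) (hstab : IsStable (Real.sqrt γ₁ • M))
    (hP₁ : P₁ = S + γ₁ • (Mᵀ * P₁ * M)) :
    IsStable (Real.sqrt ((1 / (8 * opNorm P₁ ^ 4) + 1) ^ 2 * γ₁) • M)
    ∧ ∀ P₂ : Matrix (Fin d) (Fin d) ℝ,
        P₂ = S + ((1 / (8 * opNorm P₁ ^ 4) + 1) ^ 2 * γ₁) • (Mᵀ * P₂ * M) →
        (P₂ - P₁).trace ≤ P₁.trace := by
  set p := opNorm P₁ with hp
  set c := 1 / (8 * p ^ 4) + 1 with hc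
  have hg : 0 ≤ c ^ 2 * γ₁ := by positivity
  have hSx : ∀ x : Fin d → ℝ, x ⬝ᵥ x ≤ x ⬝ᵥ (S *ᵥ x) := by
    intro x
    have := hS.dotProduct_mulVec_nonneg x
    simp only [star_trivial, Matrix.sub_mulVec, Matrix.one_mulVec, dotProduct_sub] at this
    linarith
  have hxx : ∀ x : Fin d → ℝ, 0 ≤ x ⬝ᵥ x := fun x => by
    simpa using dotProduct_star_self_nonneg x
  have hq := aux_quad M S P₁ γ₁ hγ₁.le hP₁
  have hP0 : ∀ x, 0 ≤ x ⬝ᵥ (P₁ *ᵥ x) := by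
    apply aux_lyap _ _ hstab
    intro x
    linarith [(hq x).1, hSx x, hxx x]
  have hPS : ∀ x, x ⬝ᵥ (S *ᵥ x) ≤ x ⬝ᵥ (P₁ *ᵥ x) := by
    intro x
    have h1 := (hq x).2
    have h2 := mul_nonneg hγ₁.le (hP0 (M *ᵥ x))
    linarith
  have hPp := aux_opNorm P₁
  have hc1 : 0 ≤ c ^ 2 - 1 := by
    have : 1 ≤ c := by rw [hc]; have : 0 ≤ 1 / (8 * p ^ 4) := by positivity
                       linarith
    nlinarith
  have hkey : ∀ x : Fin d → ℝ, 2 * (c ^ 2 - 1) * (x ⬝ᵥ (P₁ *ᵥ x)) ≤ x ⬝ᵥ (S *ᵥ x) := by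
    intro x
    rcases eq_or_ne x 0 with rfl | hx
    · simp
    have hpos : 0 < x ⬝ᵥ x := by
      refine lt_of_le_of_ne (hxx x) (fun h => hx ?_)
      exact dotProduct_self_eq_zero.1 h.symm
    have hp1 : 1 ≤ p := by
      by_contra hlt
      push Not at hlt
      nlinarith [hPp x, hPS x, hSx x]
    have hcp : 2 * (c ^ 2 - 1) * p ≤ 1 := by
      have hp3 : 1 ≤ p ^ 3 := one_le_pow₀ hp1
      have hp4 : 1 ≤ p ^ 4 := one_le_pow₀ hp1
      have e1 : 1 / (8 * p ^ 4) * p ≤ 1 / 8 := by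
        rw [div_mul_eq_mul_div, div_le_div_iff₀ (by positivity) (by norm_num)]
        nlinarith
      have e2 : 1 / (8 * p ^ 4) ≤ 1 / 8 := by
        apply one_div_le_one_div_of_le <;> linarith
      have e3 : 0 ≤ 1 / (8 * p ^ 4) * p := by positivity
      rw [hc]
      generalize 1 / (8 * p ^ 4) = e at *
      nlinarith
    calc 2 * (c ^ 2 - 1) * (x ⬝ᵥ (P₁ *ᵥ x)) ≤ 2 * (c ^ 2 - 1) * (p * (x ⬝ᵥ x)) := by
          apply mul_le_mul_of_nonneg_left (hPp x); linarith
      _ = (2 * (c ^ 2 - 1) * p) * (x ⬝ᵥ x) := by ring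
      _ ≤ 1 * (x ⬝ᵥ x) := mul_le_mul_of_nonneg_right hcp hpos.le
      _ ≤ _ := by linarith [hSx x]
  have hsq : ∀ (X : Matrix (Fin d) (Fin d) ℝ) (x : Fin d → ℝ),
      ((Real.sqrt (c ^ 2 * γ₁) • M) *ᵥ x) ⬝ᵥ (X *ᵥ ((Real.sqrt (c ^ 2 * γ₁) • M) *ᵥ x))
        = c ^ 2 * (γ₁ * ((M *ᵥ x) ⬝ᵥ (X *ᵥ (M *ᵥ x)))) := by
    intro X x
    simp only [Matrix.smul_mulVec, Matrix.mulVec_smul, smul_dotProduct, dotProduct_smul,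
      smul_eq_mul]
    rw [← mul_assoc, Real.mul_self_sqrt hg]
    ring
  have hst : IsStable (Real.sqrt (c ^ 2 * γ₁) • M) := by
    apply aux_stable _ P₁ hP0
    intro x hx
    have hpos : 0 < x ⬝ᵥ x := by
      refine lt_of_le_of_ne (hxx x) (fun h => hx ?_)
      exact dotProduct_self_eq_zero.1 h.symm
    rw [hsq, (hq x).2]
    nlinarith [hkey x, hSx x, mul_nonneg hc1 (hpos.le.trans (hSx x))]
  refine ⟨hst, fun P₂ hP₂ => ?_⟩
  have hq2 := aux_quad M S P₂ _ hg hP₂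
  have hD : ∀ x, 0 ≤ x ⬝ᵥ (((2:ℝ) • P₁ - P₂) *ᵥ x) := by
    apply aux_lyap _ _ hst
    intro x
    have h1 := hsq P₁ x
    rw [(hq x).2] at h1
    have h2 := (hq2 x).1
    simp only [Matrix.sub_mulVec, dotProduct_sub, Matrix.smul_mulVec _ P₁, dotProduct_smul _ _ (P₁ *ᵥ _),
      smul_eq_mul]
    rw [h1, h2]
    nlinarith [hkey x, hSx x, mul_nonneg hc1 ((hxx x).trans (hSx x))]
  have htr : 0 ≤ ((2:ℝ) • P₁ - P₂).trace := by
    apply Finset.sum_nonneg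
    intro i _
    have := hD (Pi.single i 1)
    simpa using this
  rw [Matrix.trace_sub, Matrix.trace_smul, smul_eq_mul] at htr
  rw [Matrix.trace_sub]
  linarith

/-- Increasing the discount factor from `γ₁` to `γ₂ = (1/(8‖P₁‖⁴) + 1)² γ₁` keeps
`√γ₂ (A+BK)` stable and at most doubles the trace of the Lyapunov solution. -/
theorem discount_increase {d m : ℕ}
    (A : Matrix (Fin d) (Fin d) ℝ) (B : Matrix (Fin d) (Fin m) ℝ)
    (Q : Matrix (Fin d) (Fin d) ℝ) (R : Matrix (Fin m) (Fin m) ℝ)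
    (K : Matrix (Fin m) (Fin d) ℝ)
    (hQK : (Q + Kᵀ * R * K - 1).PosSemidef)
    (γ₁ : ℝ) (hγ₁ : γ₁ ∈ Set.Ioc (0 : ℝ) 1)
    (hstab : IsStable (Real.sqrt γ₁ • (A + B * K)))
    (P₁ : Matrix (Fin d) (Fin d) ℝ)
    (hP₁ : P₁ = (Q + Kᵀ * R * K) + γ₁ • ((A + B * K)ᵀ * P₁ * (A + B * K))) :
    IsStable (Real.sqrt ((1 / (8 * opNorm P₁ ^ 4) + 1) ^ 2 * γ₁) • (A + B * K))
    ∧ ∀ P₂ : Matrix (Fin d) (Fin d) ℝ,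
        P₂ = (Q + Kᵀ * R * K)
            + ((1 / (8 * opNorm P₁ ^ 4) + 1) ^ 2 * γ₁) • ((A + B * K)ᵀ * P₂ * (A + B * K)) →
        (P₂ - P₁).trace ≤ P₁.trace := by
  exact aux_main (A + B * K) (Q + Kᵀ * R * K) P₁ hQK γ₁ hγ₁.1 hstab hP₁
end

section
/- Let A ∈ ℝ^{d×d} be a stable matrix (spectral radius < 1), let Q ⪰ I, and let P be the unique solution of the Lyapunov equation P = Q + Aᵀ P A. Then for every matrix Δ ∈ ℝ^{d×d} with ‖Δ‖_op ≤ 1/(6‖P‖_op²), it holds for all integers j ≥ 0 that ((A + Δ)ᵀ)^j P (A + Δ)^j ⪯ (1 − 1/(2‖P‖_op))^j · P. In particular A + Δ is stable. -/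
open Matrix

section helper
open Filter Topology

attribute [local instance] Matrix.linftyOpNormedRing Matrix.linftyOpNormedAlgebra in
lemma complex_pow_tendsto {d : ℕ} (M : Matrix (Fin (d+1)) (Fin (d+1)) ℂ)
    (h : ∀ μ ∈ spectrum ℂ M, ‖μ‖ < 1) : ∀ i k, Tendsto (fun j : ℕ => (M ^ j) i k) atTop (𝓝 0) := by
  have hc : CompleteSpace (Matrix (Fin (d+1)) (Fin (d+1)) ℂ) :=
    FiniteDimensional.complete ℂ _
  have h1 : spectralRadius ℂ M < ((1 : NNReal) : ENNReal) :=
    spectrum.spectralRadius_lt_of_forall_lt M (fun k hk => by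
      have := h k hk
      exact_mod_cast this)
  obtain ⟨r, hr1, hr2⟩ := ENNReal.lt_iff_exists_nnreal_btwn.1 h1
  have h2 := (spectrum.pow_nnnorm_pow_one_div_tendsto_nhds_spectralRadius M).eventually
    (gt_mem_nhds hr1)
  have hr : r < 1 := by exact_mod_cast hr2
  have h3 : ∀ᶠ n : ℕ in atTop, ‖M ^ n‖ ≤ (r : ℝ) ^ n := by
    filter_upwards [h2, eventually_gt_atTop 0] with n hn hn0
    have hn' := ENNReal.rpow_le_rpow hn.le (z := (n : ℝ)) (by positivity)
    rw [← ENNReal.rpow_mul, one_div, inv_mul_cancel₀ (by positivity), ENNReal.rpow_one,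
      ENNReal.rpow_natCast] at hn'
    exact_mod_cast hn'
  have h4 : Tendsto (fun n : ℕ => M ^ n) atTop (𝓝 0) :=
    squeeze_zero_norm' h3 (tendsto_pow_atTop_nhds_zero_of_lt_one r.2 (by exact_mod_cast hr))
  intro i k
  exact tendsto_pi_nhds.1 (tendsto_pi_nhds.1 h4 i) k

lemma stable_pow_tendsto {d : ℕ} (A : Matrix (Fin (d+1)) (Fin (d+1)) ℝ) (hA : IsStable A) :
    Tendsto (fun j : ℕ => A ^ j) atTop (𝓝 0) := by
  refine tendsto_pi_nhds.2 fun i => tendsto_pi_nhds.2 fun k => ?_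
  have h := complex_pow_tendsto _ hA i k
  have e : ∀ j : ℕ, (A.map Complex.ofReal) ^ j = (A ^ j).map Complex.ofReal := by
    intro j
    exact (map_pow (Complex.ofRealHom.mapMatrix) A j).symm
  simp only [e, Matrix.map_apply] at h
  have := (Complex.continuous_re.tendsto _).comp h
  simpa [Function.comp_def] using this

lemma opNorm_nn {d : ℕ} (M : Matrix (Fin d) (Fin d) ℝ) : 0 ≤ opNorm M := norm_nonneg _

lemma toLp_norm_sq {d : ℕ} (x : Fin d → ℝ) : ‖WithLp.toLp 2 x‖ ^ 2 = x ⬝ᵥ x := by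
  rw [EuclideanSpace.norm_sq_eq]
  simp [dotProduct, sq]

lemma opNorm_mulVec {d : ℕ} (M : Matrix (Fin d) (Fin d) ℝ) (x : Fin d → ℝ) :
    ‖WithLp.toLp 2 (M *ᵥ x)‖ ≤ opNorm M * ‖WithLp.toLp 2 x‖ :=
  (LinearMap.toContinuousLinearMap (Matrix.toEuclideanLin M)).le_opNorm (WithLp.toLp 2 x)

lemma opNorm_sq {d : ℕ} (M : Matrix (Fin d) (Fin d) ℝ) (x : Fin d → ℝ) :
    (M *ᵥ x) ⬝ᵥ (M *ᵥ x) ≤ opNorm M ^ 2 * (x ⬝ᵥ x) := by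
  rw [← toLp_norm_sq, ← toLp_norm_sq, ← mul_pow]
  exact pow_le_pow_left₀ (norm_nonneg _) (opNorm_mulVec M x) 2

lemma opNorm_quad {d : ℕ} (M : Matrix (Fin d) (Fin d) ℝ) (x : Fin d → ℝ) :
    x ⬝ᵥ (M *ᵥ x) ≤ opNorm M * (x ⬝ᵥ x) := by
  have h := real_inner_le_norm (WithLp.toLp 2 (M *ᵥ x)) (WithLp.toLp 2 x)
  have h2 := mul_le_mul_of_nonneg_right (opNorm_mulVec M x) (norm_nonneg (WithLp.toLp 2 x))
  have h3 : inner ℝ (WithLp.toLp 2 (M *ᵥ x)) (WithLp.toLp 2 x) = x ⬝ᵥ (M *ᵥ x) := by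
    simp [PiLp.inner_apply, dotProduct]
  rw [← toLp_norm_sq]
  rw [h3] at h
  nlinarith

lemma quad_conj {d : ℕ} (P B : Matrix (Fin d) (Fin d) ℝ) (x : Fin d → ℝ) :
    x ⬝ᵥ ((Bᵀ * P * B) *ᵥ x) = (B *ᵥ x) ⬝ᵥ (P *ᵥ (B *ᵥ x)) := by
  rw [← Matrix.mulVec_mulVec, ← Matrix.mulVec_mulVec, Matrix.dotProduct_mulVec,
    Matrix.vecMul_transpose]

lemma sym_dot {d : ℕ} {P : Matrix (Fin d) (Fin d) ℝ} (hP : Pᵀ = P) (x y : Fin d → ℝ) :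
    y ⬝ᵥ (P *ᵥ x) = x ⬝ᵥ (P *ᵥ y) := by
  rw [Matrix.dotProduct_mulVec, dotProduct_comm, ← Matrix.mulVec_transpose, hP]

lemma tendsto_conj {d : ℕ} {A : Matrix (Fin (d+1)) (Fin (d+1)) ℝ} (hA : IsStable A)
    (D : Matrix (Fin (d+1)) (Fin (d+1)) ℝ) :
    Tendsto (fun j : ℕ => (A ^ j)ᵀ * D * A ^ j) atTop (𝓝 0) := by
  have h := stable_pow_tendsto A hA
  have hc : Continuous fun X : Matrix (Fin (d+1)) (Fin (d+1)) ℝ => Xᵀ * D * X := by fun_prop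
  have := (hc.tendsto 0).comp h
  simpa [Function.comp_def] using this

lemma lyap_symm {d : ℕ} {A Q P : Matrix (Fin (d+1)) (Fin (d+1)) ℝ} (hA : IsStable A)
    (hQ : Qᵀ = Q) (hP : P = Q + Aᵀ * P * A) : Pᵀ = P := by
  have h1 : Pᵀ - P = Aᵀ * (Pᵀ - P) * A := by
    have : Pᵀ = Q + Aᵀ * Pᵀ * A := by
      conv_lhs => rw [hP]
      simp [hQ, Matrix.mul_assoc]
    calc Pᵀ - P = (Q + Aᵀ * Pᵀ * A) - (Q + Aᵀ * P * A) := by rw [← this, ← hP]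
      _ = Aᵀ * (Pᵀ - P) * A := by noncomm_ring
  have h2 : ∀ j : ℕ, (A ^ j)ᵀ * (Pᵀ - P) * A ^ j = Pᵀ - P := by
    intro j
    induction j with
    | zero => simp
    | succ j ih =>
      rw [pow_succ, Matrix.transpose_mul]
      calc Aᵀ * (A ^ j)ᵀ * (Pᵀ - P) * (A ^ j * A)
          = Aᵀ * ((A ^ j)ᵀ * (Pᵀ - P) * A ^ j) * A := by noncomm_ring
        _ = _ := by rw [ih, ← h1]
  have h3 := tendsto_conj hA (Pᵀ - P)
  simp only [h2] at h3
  exact sub_eq_zero.1 (tendsto_nhds_unique tendsto_const_nhds h3)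

lemma lyap_ge {d : ℕ} {A Q P : Matrix (Fin (d+1)) (Fin (d+1)) ℝ} (hA : IsStable A)
    (hQ : (Q - 1).PosSemidef) (hP : P = Q + Aᵀ * P * A) (x : Fin (d+1) → ℝ) :
    0 ≤ x ⬝ᵥ (P *ᵥ x) ∧
    (A *ᵥ x) ⬝ᵥ (P *ᵥ (A *ᵥ x)) + x ⬝ᵥ x ≤ x ⬝ᵥ (P *ᵥ x) := by
  have h1 : ∀ x : Fin (d+1) → ℝ,
      (A *ᵥ x) ⬝ᵥ (P *ᵥ (A *ᵥ x)) + x ⬝ᵥ x ≤ x ⬝ᵥ (P *ᵥ x) := by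
    intro x
    have hq := (Matrix.posSemidef_iff_dotProduct_mulVec.1 hQ).2 x
    simp only [star_trivial, Matrix.sub_mulVec, Matrix.one_mulVec, dotProduct_sub] at hq
    conv_rhs => rw [hP]
    rw [Matrix.add_mulVec, dotProduct_add, quad_conj]
    linarith
  refine ⟨?_, h1 x⟩
  have h2 : ∀ j : ℕ, x ⬝ᵥ (((A ^ j)ᵀ * P * A ^ j) *ᵥ x) ≤ x ⬝ᵥ (P *ᵥ x) := by
    intro j
    rw [quad_conj]
    induction j with
    | zero => simp
    | succ j ih =>
      refine le_trans ?_ ih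
      rw [pow_succ', ← Matrix.mulVec_mulVec]
      have := h1 (A ^ j *ᵥ x)
      have h0 : 0 ≤ (A ^ j *ᵥ x) ⬝ᵥ (A ^ j *ᵥ x) := by
        rw [← toLp_norm_sq]; positivity
      linarith
  have hc : Continuous fun X : Matrix (Fin (d+1)) (Fin (d+1)) ℝ => x ⬝ᵥ (X *ᵥ x) := by fun_prop
  have h3 := (hc.tendsto 0).comp (tendsto_conj hA P)
  have := le_of_tendsto' h3 h2
  simpa using this

lemma stable_of_contr {d : ℕ} {P B : Matrix (Fin d) (Fin d) ℝ} (hs : Pᵀ = P) {c : ℝ} (hc : c < 1)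
    (hpos : ∀ x : Fin d → ℝ, x ⬝ᵥ x ≤ x ⬝ᵥ (P *ᵥ x))
    (hB : ∀ x : Fin d → ℝ, (B *ᵥ x) ⬝ᵥ (P *ᵥ (B *ᵥ x)) ≤ c * (x ⬝ᵥ (P *ᵥ x))) : IsStable B := by
  intro μ hμ
  rw [spectrum.mem_iff, Matrix.isUnit_iff_isUnit_det, isUnit_iff_ne_zero, not_not,
    ← Matrix.exists_mulVec_eq_zero_iff] at hμ
  obtain ⟨z, hz, h⟩ := hμ
  have hz' : (B.map Complex.ofReal) *ᵥ z = μ • z := by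
    rw [Matrix.sub_mulVec, sub_eq_zero, Algebra.algebraMap_eq_smul_one, Matrix.smul_mulVec,
      Matrix.one_mulVec] at h
    exact h.symm
  set x : Fin d → ℝ := fun i => (z i).re with hx
  set y : Fin d → ℝ := fun i => (z i).im with hy
  have hBx : B *ᵥ x = μ.re • x - μ.im • y := by
    ext i
    have := congrArg Complex.re (congrFun hz' i)
    simpa [Matrix.mulVec, dotProduct] using this
  have hBy : B *ᵥ y = μ.re • y + μ.im • x := by
    ext i
    have := congrArg Complex.im (congrFun hz' i)
    simpa [Matrix.mulVec, dotProduct] using this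
  have h1 := hB x
  have h2 := hB y
  have hxy := sym_dot hs x y
  rw [hBx] at h1
  rw [hBy] at h2
  simp only [Matrix.mulVec_sub, Matrix.mulVec_add, Matrix.mulVec_smul, dotProduct_sub,
    dotProduct_add, sub_dotProduct, add_dotProduct, smul_dotProduct, dotProduct_smul,
    smul_eq_mul, hxy] at h1 h2
  have h3 := hpos x
  have h4 := hpos y
  have h5 : 0 < x ⬝ᵥ x + y ⬝ᵥ y := by
    obtain ⟨i, hi⟩ := Function.ne_iff.1 hz
    have e : x ⬝ᵥ x + y ⬝ᵥ y = ∑ i, Complex.normSq (z i) := by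
      simp [dotProduct, Complex.normSq_apply, hx, hy, Finset.sum_add_distrib]
    rw [e]
    exact Finset.sum_pos' (fun _ _ => Complex.normSq_nonneg _)
      ⟨i, Finset.mem_univ _, Complex.normSq_pos.2 hi⟩
  have h6 : ‖μ‖ ^ 2 = μ.re * μ.re + μ.im * μ.im := by
    rw [Complex.sq_norm, Complex.normSq_apply]
  have h7 : ‖μ‖ ^ 2 * (x ⬝ᵥ (P *ᵥ x) + y ⬝ᵥ (P *ᵥ y)) ≤
      c * (x ⬝ᵥ (P *ᵥ x) + y ⬝ᵥ (P *ᵥ y)) := by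
    rw [h6]; linarith
  have h8 : ‖μ‖ ^ 2 ≤ c := le_of_mul_le_mul_right h7 (by linarith)
  have h9 := norm_nonneg μ
  nlinarith

lemma step {d : ℕ} {A Q P Δ : Matrix (Fin (d+1)) (Fin (d+1)) ℝ} (hA : IsStable A)
    (hQ : (Q - 1).PosSemidef) (hP : P = Q + Aᵀ * P * A) (hs : Pᵀ = P) (hp : 1 ≤ opNorm P)
    (hΔ : opNorm Δ ≤ 1 / (6 * opNorm P ^ 2)) (x : Fin (d+1) → ℝ) :
    ((A + Δ) *ᵥ x) ⬝ᵥ (P *ᵥ ((A + Δ) *ᵥ x)) ≤ (1 - 1 / (2 * opNorm P)) * (x ⬝ᵥ (P *ᵥ x)) := by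
  obtain ⟨-, h1⟩ := lyap_ge hA hQ hP x
  have h2 := opNorm_quad P x
  have h3 := opNorm_sq Δ x
  have h4 := opNorm_quad P (Δ *ᵥ x)
  have h5 := opNorm_nn Δ
  set p := opNorm P
  set δ := opNorm Δ
  have hn : 0 ≤ x ⬝ᵥ x := by rw [← toLp_norm_sq]; positivity
  have h6 := (lyap_ge hA hQ hP (A *ᵥ x - (6 * p) • (Δ *ᵥ x))).1
  have hxy := sym_dot hs (A *ᵥ x) (Δ *ᵥ x)
  simp only [Matrix.mulVec_sub, Matrix.mulVec_smul, dotProduct_sub, sub_dotProduct,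
    smul_dotProduct, dotProduct_smul, smul_eq_mul, hxy] at h6
  simp only [Matrix.add_mulVec, Matrix.mulVec_add, dotProduct_add, add_dotProduct, hxy]
  set u := (A *ᵥ x) ⬝ᵥ (P *ᵥ (A *ᵥ x))
  set v := (Δ *ᵥ x) ⬝ᵥ (P *ᵥ (Δ *ᵥ x))
  set w := (A *ᵥ x) ⬝ᵥ (P *ᵥ (Δ *ᵥ x))
  set n := x ⬝ᵥ x
  set m := (Δ *ᵥ x) ⬝ᵥ (Δ *ᵥ x)
  set f := x ⬝ᵥ (P *ᵥ x)
  have hp0 : 0 < p := by linarith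
  -- v ≤ n / (36 p^3)
  have hδ2 : δ ^ 2 ≤ (1 / (6 * p ^ 2)) ^ 2 := pow_le_pow_left₀ h5 hΔ 2
  have hv : v ≤ n / (36 * p ^ 3) := by
    calc v ≤ p * m := h4
      _ ≤ p * ((1 / (6 * p ^ 2)) ^ 2 * n) := by
        apply mul_le_mul_of_nonneg_left _ hp0.le
        exact h3.trans (mul_le_mul_of_nonneg_right hδ2 hn)
      _ = n / (36 * p ^ 3) := by field_simp; ring
  have hv1 : p * v ≤ n / 36 := by
    calc p * v ≤ p * (n / (36 * p ^ 3)) := mul_le_mul_of_nonneg_left hv hp0.le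
      _ = n / 36 * (1 / p ^ 2) := by field_simp
      _ ≤ n / 36 * 1 := by
        apply mul_le_mul_of_nonneg_left _ (by positivity)
        rw [div_le_one (by positivity)]
        nlinarith
      _ = n / 36 := mul_one _
  have hv2 : v ≤ n / 36 := by
    by_cases hv0 : v ≤ 0
    · linarith [div_nonneg hn (by norm_num : (0:ℝ) ≤ 36)]
    · nlinarith
  have hw : 2 * w ≤ n / 3 := by
    have : 12 * p * w ≤ p * n + 36 * p * (n / 36) := by nlinarith
    have : p * (12 * w) ≤ p * (2 * n) := by linarith
    have := le_of_mul_le_mul_left this hp0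
    linarith
  have hf : 1 / (2 * p) * f ≤ n / 2 := by
    rw [one_div, inv_mul_le_iff₀ (by positivity)]
    linarith
  linarith

end helper

/-- Stability margin: if `A` is stable, `Q ⪰ I`, `P = Q + AᵀPA` and
`‖Δ‖_op ≤ 1/(6‖P‖_op²)`, then `((A+Δ)ᵀ)ʲ P (A+Δ)ʲ ⪯ (1 - 1/(2‖P‖_op))ʲ P` for all `j`,
and in particular `A + Δ` is stable. -/
theorem stability_margin {d : ℕ}
    (A Q P Δ : Matrix (Fin d) (Fin d) ℝ)
    (hA : IsStable A) (hQ : (Q - 1).PosSemidef)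
    (hP : P = Q + Aᵀ * P * A)
    (hΔ : opNorm Δ ≤ 1 / (6 * opNorm P ^ 2)) :
    (∀ j : ℕ,
      ((1 - 1 / (2 * opNorm P)) ^ j • P - ((A + Δ)ᵀ) ^ j * P * (A + Δ) ^ j).PosSemidef)
    ∧ IsStable (A + Δ) := by
  cases d with
  | zero =>
    refine ⟨fun j => ?_, ?_⟩
    · rw [Subsingleton.elim (_ - _) (0 : Matrix (Fin 0) (Fin 0) ℝ)]
      exact Matrix.PosSemidef.zero
    · intro μ hμ
      rw [spectrum.of_subsingleton] at hμ
      exact absurd hμ (Set.notMem_empty _)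
  | succ d =>
    have hQs : Qᵀ = Q := by
      have h := hQ.isHermitian.eq
      rw [Matrix.conjTranspose_eq_transpose_of_trivial, Matrix.transpose_sub,
        Matrix.transpose_one] at h
      exact sub_left_injective h
    have hs := lyap_symm hA hQs hP
    have hge : ∀ x : Fin (d+1) → ℝ, x ⬝ᵥ x ≤ x ⬝ᵥ (P *ᵥ x) := fun x => by
      have h1 := (lyap_ge hA hQ hP x).2
      have h2 := (lyap_ge hA hQ hP (A *ᵥ x)).1
      linarith
    have hp : 1 ≤ opNorm P := by
      have h1 := hge (Pi.single 0 1)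
      have h2 := opNorm_quad P (Pi.single 0 1)
      have h3 : (Pi.single 0 1 : Fin (d+1) → ℝ) ⬝ᵥ (Pi.single 0 1) = 1 := by simp
      rw [h3] at h1 h2
      linarith
    have hstep := step hA hQ hP hs hp hΔ
    have hc0 : 0 ≤ 1 - 1 / (2 * opNorm P) := by
      rw [sub_nonneg, div_le_one (by linarith)]
      linarith
    have hc1 : 1 - 1 / (2 * opNorm P) < 1 := by
      have : 0 < 1 / (2 * opNorm P) := by positivity
      linarith
    refine ⟨fun j => ?_, stable_of_contr hs hc1 hge hstep⟩
    rw [← Matrix.transpose_pow]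
    refine Matrix.posSemidef_iff_dotProduct_mulVec.2 ⟨?_, fun x => ?_⟩
    · rw [Matrix.IsHermitian, Matrix.conjTranspose_eq_transpose_of_trivial]
      simp only [Matrix.transpose_sub, Matrix.transpose_smul, Matrix.transpose_mul,
        Matrix.transpose_transpose, hs, Matrix.mul_assoc]
    · rw [star_trivial, Matrix.sub_mulVec, dotProduct_sub, quad_conj, Matrix.smul_mulVec,
        dotProduct_smul, smul_eq_mul, sub_nonneg]
      induction j with
      | zero => simp
      | succ j ih =>
        rw [pow_succ' (A + Δ), ← Matrix.mulVec_mulVec]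
        refine (hstep _).trans ?_
        rw [pow_succ', mul_assoc]
        exact mul_le_mul_of_nonneg_left ih hc0
end

section
/- Let G(x,u) = A x + B u + f(x,u) with ‖f(x,u)‖ ≤ β(‖x‖² + ‖u‖²) whenever ‖x‖ + ‖u‖ ≤ r_nl. Let γ ∈ (0,1], Q ⪰ I, R ⪰ I, and let K ∈ ℝ^{m×d} be such that √γ·(A + BK) is stable, with Lyapunov solution P = P_{K,γ}. Then for every x ∈ ℝ^d with xᵀ P x ≤ r_nl² / (4 β² ‖P‖_op³), it holds that γ · G(x, Kx)ᵀ P G(x, Kx) ≤ (1 − 1/(2‖P‖_op)) · xᵀ P x. -/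
open Matrix

/-- Euclidean norm of a vector in `ℝ^n`. -/
noncomputable def evnorm {n : ℕ} (x : Fin n → ℝ) : ℝ :=
  ‖(WithLp.equiv 2 (Fin n → ℝ)).symm x‖

section
attribute [local instance] Matrix.frobeniusNormedRing Matrix.frobeniusNormedAlgebra

theorem pow_bd {n : ℕ} (M : Matrix (Fin n) (Fin n) ℝ) (h : IsStable M) :
    ∃ r : ℝ, 0 ≤ r ∧ r < 1 ∧ ∀ᶠ k : ℕ in Filter.atTop, ‖M ^ k‖ ≤ r ^ k := by
  have hsr : spectralRadius ℂ (M.map Complex.ofReal) < 1 := by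
    rcases subsingleton_or_nontrivial (Matrix (Fin n) (Fin n) ℂ) with hs | hs
    · rw [show M.map Complex.ofReal = 0 from Subsingleton.elim _ _]; simp
    · obtain ⟨k, hk, hk'⟩ := spectrum.exists_nnnorm_eq_spectralRadius (M.map Complex.ofReal)
      rw [← hk']
      have := h k hk
      exact_mod_cast (show ‖k‖₊ < 1 from this)
  obtain ⟨r, hr1, hr2⟩ := ENNReal.lt_iff_exists_nnreal_btwn.1 hsr
  refine ⟨r, r.2, by exact_mod_cast hr2, ?_⟩
  have ht := spectrum.pow_nnnorm_pow_one_div_tendsto_nhds_spectralRadius (M.map Complex.ofReal)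
  filter_upwards [ht.eventually_lt_const hr1, Filter.eventually_gt_atTop 0] with k hk hk0
  have hk0' : (0:ℝ) < k := by exact_mod_cast hk0
  have h1 : (‖(M.map Complex.ofReal) ^ k‖₊ : ENNReal) ≤ (r : ENNReal) ^ k := by
    have := ENNReal.rpow_le_rpow hk.le hk0'.le
    rwa [← ENNReal.rpow_mul, one_div, inv_mul_cancel₀ hk0'.ne', ENNReal.rpow_one, ENNReal.rpow_natCast] at this
  have h2 : ‖(M.map Complex.ofReal) ^ k‖₊ ≤ r ^ k := by exact_mod_cast h1
  have h3 : (M.map Complex.ofReal) ^ k = (M ^ k).map Complex.ofReal := by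
    have := (map_pow (Complex.ofRealHom.mapMatrix (m := Fin n)) M k)
    exact this.symm
  rw [h3] at h2
  have h4 : ‖(M^k).map Complex.ofReal‖ = ‖M^k‖ := Matrix.frobenius_norm_map_eq _ _ (fun a => by simp)
  rw [← h4]
  exact_mod_cast h2

theorem summ {n : ℕ} (M S : Matrix (Fin n) (Fin n) ℝ) (γ : ℝ) (hγ : 0 ≤ γ) (h : IsStable (Real.sqrt γ • M)) :
    Summable (fun t : ℕ => γ ^ t • ((M ^ t)ᵀ * S * M ^ t)) := by
  obtain ⟨r, hr0, hr1, hb⟩ := pow_bd _ h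
  have : Summable (fun t : ℕ => ‖S‖ * (r^2) ^ t) :=
    (summable_geometric_of_lt_one (by positivity) (by nlinarith)).mul_left _
  have h2 : ∀ t : ℕ, γ ^ t • ((M ^ t)ᵀ * S * M ^ t) = ((Real.sqrt γ • M) ^ t)ᵀ * S * (Real.sqrt γ • M)^t := by
    intro t
    rw [smul_pow, Matrix.transpose_smul, Matrix.smul_mul, Matrix.smul_mul, Matrix.mul_smul, smul_smul,
      ← mul_pow, Real.mul_self_sqrt hγ]
  refine Summable.of_norm_bounded_eventually_nat this ?_
  filter_upwards [hb] with t ht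
  rw [h2]
  calc _ ≤ ‖((Real.sqrt γ • M) ^ t)ᵀ‖ * ‖S‖ * ‖(Real.sqrt γ • M)^t‖ :=
        (norm_mul_le _ _).trans (by gcongr; exact norm_mul_le _ _)
    _ = ‖S‖ * (‖(Real.sqrt γ • M)^t‖ * ‖(Real.sqrt γ • M)^t‖) := by
        rw [Matrix.frobenius_norm_transpose]; ring
    _ ≤ ‖S‖ * (r^t * r^t) := by gcongr
    _ = _ := by ring

theorem lyap_eq {n : ℕ} (M S P : Matrix (Fin n) (Fin n) ℝ) (γ : ℝ) (hγ : 0 ≤ γ) (h : IsStable (Real.sqrt γ • M))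
    (hP : P = ∑' t : ℕ, γ ^ t • ((M ^ t)ᵀ * S * M ^ t)) : P = S + γ • (Mᵀ * P * M) := by
  have hs := summ M S γ hγ h
  have e : ∀ t : ℕ, γ ^ (t+1) • ((M ^ (t+1))ᵀ * S * M ^ (t+1)) = γ • (Mᵀ * (γ ^ t • ((M ^ t)ᵀ * S * M ^ t)) * M) := by
    intro t
    rw [pow_succ M, Matrix.transpose_mul, Matrix.mul_smul, Matrix.smul_mul, smul_smul, pow_succ' γ]
    simp only [Matrix.mul_assoc]
  conv_lhs => rw [hP, hs.tsum_eq_zero_add]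
  simp only [e]
  rw [Summable.tsum_const_smul _ ((hs.mul_left _).mul_right _), Summable.tsum_mul_right _ (hs.mul_left _),
    Summable.tsum_mul_left _ hs, ← hP]
  simp

theorem quad_conj_s9 {n k : ℕ} (N : Matrix (Fin k) (Fin n) ℝ) (S : Matrix (Fin k) (Fin k) ℝ) (x : Fin n → ℝ) :
    x ⬝ᵥ (Nᵀ * S * N) *ᵥ x = (N *ᵥ x) ⬝ᵥ S *ᵥ (N *ᵥ x) := by
  rw [← Matrix.mulVec_mulVec, ← Matrix.mulVec_mulVec, Matrix.dotProduct_mulVec x, Matrix.vecMul_transpose]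

theorem quad_nonneg {n : ℕ} (M S : Matrix (Fin n) (Fin n) ℝ) (γ : ℝ) (hγ : 0 ≤ γ) (h : IsStable (Real.sqrt γ • M))
    (hS : ∀ x, 0 ≤ x ⬝ᵥ S *ᵥ x) (x : Fin n → ℝ) :
    0 ≤ x ⬝ᵥ (∑' t : ℕ, γ ^ t • ((M ^ t)ᵀ * S * M ^ t)) *ᵥ x := by
  have hs := (summ M S γ hγ h).hasSum
  let φ : Matrix (Fin n) (Fin n) ℝ →+ ℝ :=
    { toFun := fun P => x ⬝ᵥ P *ᵥ x, map_zero' := by simp, map_add' := by intro a b; simp [Matrix.add_mulVec] }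
  have hc : Continuous φ := by
    show Continuous (fun P : Matrix (Fin n) (Fin n) ℝ => x ⬝ᵥ P *ᵥ x)
    fun_prop
  have h2 := hs.map φ hc
  refine h2.nonneg ?_
  intro t
  show 0 ≤ x ⬝ᵥ (γ ^ t • ((M ^ t)ᵀ * S * M ^ t)) *ᵥ x
  rw [Matrix.smul_mulVec, dotProduct_smul, quad_conj_s9]
  exact mul_nonneg (pow_nonneg hγ t) (hS _)

theorem poly (w c : ℝ) (hw : 0 ≤ w) (hc : 0 ≤ c) (h : c ≤ 1 - w^2) :
   (w + c * (1-w^2)/2)^2 ≤ 1 - c/2 := by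
  have h0 : w ≤ 1 := by nlinarith
  have h1 : w * (1-w^2) + (1-w^2)^3/4 ≤ 1/2 := by
    have hz : 0 ≤ 1 - w^2 := hc.trans h
    have h3 : w ≤ 7/6 * (w^2 + 9/49) := by nlinarith [sq_nonneg (w - 3/7)]
    have h4 := mul_le_mul_of_nonneg_right h3 hz
    have hz0 : 0 ≤ w^2 := sq_nonneg w
    generalize w^2 = z at *
    have : 0 ≤ z * (z - 2/5)^2 := by positivity
    nlinarith [sq_nonneg (z - 1/5), sq_nonneg (z-2/5), mul_nonneg hz hz0, mul_nonneg hz0 (sq_nonneg (z-1/5)), mul_nonneg hz (sq_nonneg (z-1/5))]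
  have h2 : (w + c * (1-w^2)/2)^2 ≤ (w + (1-w^2) * (1-w^2)/2)^2 := by
    have : 0 ≤ 1 - w^2 := hc.trans h
    gcongr
  nlinarith [mul_le_mul_of_nonneg_left h1 (hc.trans h)]

end

theorem ev_sq {n : ℕ} (x : Fin n → ℝ) : evnorm x ^ 2 = x ⬝ᵥ x := by
  unfold evnorm
  rw [EuclideanSpace.norm_sq_eq]
  simp [dotProduct, sq]

theorem ev_nonneg {n : ℕ} (x : Fin n → ℝ) : 0 ≤ evnorm x := norm_nonneg _

theorem quad_le {n : ℕ} (P : Matrix (Fin n) (Fin n) ℝ) (x : Fin n → ℝ) :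
    x ⬝ᵥ P *ᵥ x ≤ opNorm P * evnorm x ^ 2 := by
  have h1 := (LinearMap.toContinuousLinearMap (Matrix.toEuclideanLin P)).le_opNorm (WithLp.toLp 2 x)
  have h2 := real_inner_le_norm (WithLp.toLp 2 x) (LinearMap.toContinuousLinearMap (Matrix.toEuclideanLin P) (WithLp.toLp 2 x))
  have h3 : inner ℝ (WithLp.toLp 2 x) (LinearMap.toContinuousLinearMap (Matrix.toEuclideanLin P) (WithLp.toLp 2 x)) = x ⬝ᵥ P *ᵥ x := by
    simp [PiLp.inner_apply, dotProduct, mul_comm]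
  rw [h3] at h2
  refine h2.trans ((mul_le_mul_of_nonneg_left h1 (norm_nonneg _)).trans (le_of_eq ?_))
  unfold opNorm evnorm
  show _ = _ * ‖WithLp.toLp 2 x‖ ^ 2
  ring

theorem cross {n : ℕ} (P : Matrix (Fin n) (Fin n) ℝ) (hP : ∀ x, 0 ≤ x ⬝ᵥ P *ᵥ x) (a b : Fin n → ℝ) :
    (a + b) ⬝ᵥ P *ᵥ (a + b) ≤ (Real.sqrt (a ⬝ᵥ P *ᵥ a) + Real.sqrt (b ⬝ᵥ P *ᵥ b)) ^ 2 := by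
  have e : ∀ t : ℝ, 0 ≤ (a ⬝ᵥ P *ᵥ a) * (t * t) + (a ⬝ᵥ P *ᵥ b + b ⬝ᵥ P *ᵥ a) * t + b ⬝ᵥ P *ᵥ b := by
    intro t
    have := hP (t • a + b)
    simp only [Matrix.mulVec_add, Matrix.mulVec_smul, dotProduct_add, add_dotProduct, dotProduct_smul,
      smul_dotProduct, smul_eq_mul] at this
    linarith
  have h := discrim_le_zero e
  unfold discrim at h
  have ha := hP a
  have hb := hP b
  simp only [Matrix.mulVec_add, dotProduct_add, add_dotProduct]
  have h1 := Real.sq_sqrt ha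
  have h2 := Real.sq_sqrt hb
  have h3 : a ⬝ᵥ P *ᵥ b + b ⬝ᵥ P *ᵥ a ≤ 2 * (Real.sqrt (a ⬝ᵥ P *ᵥ a) * Real.sqrt (b ⬝ᵥ P *ᵥ b)) := by
    refine abs_le_of_sq_le_sq' ?_ (by positivity) |>.2
    rw [mul_pow, mul_pow, h1, h2]
    linarith
  nlinarith

theorem scalar (V s a p β γ rnl Ny Nf : ℝ) (hV : 0 < V) (hp : 1 ≤ p) (hs : a ≤ s) (hVp : V ≤ p * a)
    (hsV : s ≤ V) (hγ : γ ∈ Set.Ioc (0:ℝ) 1) (hβ : 1 ≤ β) (hr0 : 0 < rnl) (hr : rnl ≤ 1)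
    (hNy : γ * Ny ≤ V - s) (hNy0 : 0 ≤ Ny) (hNf0 : 0 ≤ Nf) (hNf : Nf ≤ p * (β * s)^2)
    (hb : V ≤ rnl ^ 2 / (4 * β ^ 2 * p ^ 3)) :
    γ * (Real.sqrt Ny + Real.sqrt Nf)^2 ≤ (1 - 1 / (2 * p)) * V := by
  have hp0 : 0 < p := by linarith
  have ha : 0 < a := by
    by_contra hh
    nlinarith
  have hs0 : 0 < s := by linarith
  rw [le_div_iff₀ (by positivity)] at hb
  have hb' : V * (4 * β ^ 2 * p ^ 3) ≤ 1 := hb.trans (by nlinarith)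
  set v := Real.sqrt V with hv
  have hv0 : 0 < v := Real.sqrt_pos.2 hV
  have hvv : v ^ 2 = V := Real.sq_sqrt hV.le
  set w := Real.sqrt (1 - s / V) with hw
  have hw2 : w ^ 2 = 1 - s / V := Real.sq_sqrt (by rw [sub_nonneg, div_le_one hV]; exact hsV)
  have hp1 := poly w (1/p) (Real.sqrt_nonneg _) (by positivity) (by
    rw [hw2, sub_sub_cancel, div_le_div_iff₀ hp0 hV]; nlinarith)
  have hg : Real.sqrt γ ^ 2 = γ := Real.sq_sqrt hγ.1.le
  have hsg1 : Real.sqrt γ ≤ 1 := Real.sqrt_le_one.2 hγ.2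
  have k1 : Real.sqrt γ * Real.sqrt Ny ≤ v * w := by
    rw [← Real.sqrt_mul hγ.1.le, hv, hw, ← Real.sqrt_mul hV.le]
    apply Real.sqrt_le_sqrt
    rw [mul_sub, mul_div_cancel₀ _ hV.ne']; linarith
  have k2 : Real.sqrt γ * Real.sqrt Nf ≤ v * (1/p * (1 - w^2)/2) := by
    have : Real.sqrt Nf ≤ v * (1/p * (1 - w^2)/2) := by
      rw [hw2, sub_sub_cancel]
      apply Real.sqrt_le_iff.2 ⟨by positivity, ?_⟩
      refine hNf.trans ?_
      rw [mul_pow v, hvv]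
      have : V * (1/p * (s/V)/2)^2 = s^2 / (4 * p^2 * V) := by field_simp; ring
      rw [this, le_div_iff₀ (by positivity)]
      have := mul_le_mul_of_nonneg_left hb' (sq_nonneg s)
      linarith
    have h0 := Real.sqrt_nonneg Nf
    nlinarith
  calc γ * (Real.sqrt Ny + Real.sqrt Nf)^2
      = (Real.sqrt γ * Real.sqrt Ny + Real.sqrt γ * Real.sqrt Nf)^2 := by rw [← mul_add, mul_pow, hg]
    _ ≤ (v * w + v * (1/p * (1 - w^2)/2))^2 := by gcongr
    _ = V * (w + 1/p * (1 - w^2)/2)^2 := by rw [← mul_add, mul_pow, hvv]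
    _ ≤ V * (1 - 1/p/2) := by gcongr
    _ = _ := by field_simp

/-- Lyapunov decrease for the damped nonlinear system: if the remainder
`f(x,u) = G(x,u) - Ax - Bu` is quadratically small near the origin, `Q, R ⪰ I`,
`√γ(A+BK)` is stable with value matrix `P = P_{K,γ}`, then for every `x` with
`xᵀPx ≤ r_nl²/(4β²‖P‖³)` we have
`γ · G(x,Kx)ᵀ P G(x,Kx) ≤ (1 - 1/(2‖P‖)) xᵀPx`. -/
theorem nonlinear_lyapunov {d m : ℕ}
    (G : (Fin d → ℝ) → (Fin m → ℝ) → (Fin d → ℝ))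
    (A : Matrix (Fin d) (Fin d) ℝ) (B : Matrix (Fin d) (Fin m) ℝ)
    (Q : Matrix (Fin d) (Fin d) ℝ) (R : Matrix (Fin m) (Fin m) ℝ)
    (K : Matrix (Fin m) (Fin d) ℝ)
    (β rnl : ℝ) (hβ : 1 ≤ β) (hrnl0 : 0 < rnl) (hrnl1 : rnl ≤ 1)
    (hf : ∀ (x : Fin d → ℝ) (u : Fin m → ℝ), evnorm x + evnorm u ≤ rnl →
      evnorm (G x u - (A.mulVec x + B.mulVec u)) ≤ β * (evnorm x ^ 2 + evnorm u ^ 2))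
    (γ : ℝ) (hγ : γ ∈ Set.Ioc (0 : ℝ) 1)
    (hQ : (Q - 1).PosSemidef) (hR : (R - 1).PosSemidef)
    (hstab : IsStable (Real.sqrt γ • (A + B * K))) :
    ∀ x : Fin d → ℝ,
      x ⬝ᵥ (lyapP A B Q R K γ).mulVec x
          ≤ rnl ^ 2 / (4 * β ^ 2 * opNorm (lyapP A B Q R K γ) ^ 3) →
      γ * (G x (K.mulVec x) ⬝ᵥ (lyapP A B Q R K γ).mulVec (G x (K.mulVec x)))
        ≤ (1 - 1 / (2 * opNorm (lyapP A B Q R K γ)))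
            * (x ⬝ᵥ (lyapP A B Q R K γ).mulVec x) := by
  intro x hx
  have hγ0 : 0 ≤ γ := hγ.1.le
  set S := Q + Kᵀ * R * K with hSdef
  set P := lyapP A B Q R K γ with hPdef
  have hSq : ∀ z : Fin d → ℝ, evnorm z ^ 2 + evnorm (K *ᵥ z) ^ 2 ≤ z ⬝ᵥ S *ᵥ z := by
    intro z
    have h1 := hQ.dotProduct_mulVec_nonneg z
    have h2 := hR.dotProduct_mulVec_nonneg (K *ᵥ z)
    rw [Matrix.sub_mulVec, dotProduct_sub, Matrix.one_mulVec, star_trivial, sub_nonneg] at h1 h2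
    rw [ev_sq, ev_sq, hSdef, Matrix.add_mulVec, dotProduct_add, quad_conj_s9]
    exact add_le_add h1 h2
  have hP0 : ∀ z, 0 ≤ z ⬝ᵥ P *ᵥ z :=
    quad_nonneg (A + B * K) S γ hγ0 hstab (fun z => le_trans (by positivity) (hSq z))
  have hL : P = S + γ • ((A + B * K)ᵀ * P * (A + B * K)) := lyap_eq _ S P γ hγ0 hstab rfl
  have hV : x ⬝ᵥ P *ᵥ x = x ⬝ᵥ S *ᵥ x + γ * (((A + B * K) *ᵥ x) ⬝ᵥ P *ᵥ ((A + B * K) *ᵥ x)) := by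
    conv_lhs => rw [hL]
    rw [Matrix.add_mulVec, dotProduct_add, Matrix.smul_mulVec, dotProduct_smul, quad_conj_s9, smul_eq_mul]
  set y := (A + B * K) *ᵥ x with hy
  set g := G x (K *ᵥ x) - (A *ᵥ x + B *ᵥ (K *ᵥ x)) with hg
  have hG : G x (K *ᵥ x) = y + g := by
    rw [hg, hy, Matrix.add_mulVec, Matrix.mulVec_mulVec]; abel
  have hNy0 := hP0 y
  have hs := hSq x
  have hVp := quad_le P x
  have hn1 := ev_nonneg x
  have hn2 := ev_nonneg (K *ᵥ x)
  have hgy := mul_nonneg hγ0 hNy0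
  rcases (sq_nonneg (evnorm x)).eq_or_lt with h0 | h0
  · have hx0 : x = 0 := by
      rw [ev_sq] at h0
      exact dotProduct_self_eq_zero.1 h0.symm
    have hz : ∀ k : ℕ, evnorm (0 : Fin k → ℝ) = 0 := fun k => by simp [evnorm]
    have hg0 : evnorm g = 0 := by
      have := hf x (K *ᵥ x) (by simp [hx0, hz, hrnl0.le])
      refine le_antisymm (this.trans ?_) (ev_nonneg g)
      simp [hx0, hz]
    have hg1 : g = 0 := by
      have h3 := ev_sq g
      rw [hg0] at h3
      exact dotProduct_self_eq_zero.1 (by rw [← h3]; norm_num)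
    rw [hG, hg1, hy, hx0]
    simp
  have hVs : evnorm x ^ 2 + evnorm (K *ᵥ x) ^ 2 ≤ x ⬝ᵥ P *ᵥ x := by linarith
  have hp : 1 ≤ opNorm P := by
    by_contra hh
    nlinarith [sq_nonneg (evnorm (K *ᵥ x))]
  have hVpos : 0 < x ⬝ᵥ P *ᵥ x := by nlinarith [sq_nonneg (evnorm (K *ᵥ x))]
  have hVr : x ⬝ᵥ P *ᵥ x ≤ rnl ^ 2 / 4 := by
    refine hx.trans ?_
    apply div_le_div_of_nonneg_left (by positivity) (by norm_num)
    have h1 : 1 ≤ β ^ 2 := one_le_pow₀ hβ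
    have h2 : 1 ≤ opNorm P ^ 3 := one_le_pow₀ hp
    nlinarith
  have hgn := hf x (K *ᵥ x) (by
    refine abs_le_of_sq_le_sq' ?_ hrnl0.le |>.2
    nlinarith [sq_nonneg (evnorm x - evnorm (K *ᵥ x))])
  have hNf : g ⬝ᵥ P *ᵥ g ≤ opNorm P * (β * (evnorm x ^ 2 + evnorm (K *ᵥ x) ^ 2)) ^ 2 := by
    refine (quad_le P g).trans ?_
    have := ev_nonneg g
    gcongr
  rw [hG]
  refine (mul_le_mul_of_nonneg_left (cross P hP0 y g) hγ0).trans ?_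
  exact scalar _ (evnorm x ^ 2 + evnorm (K *ᵥ x) ^ 2) (evnorm x ^ 2) _ β γ rnl _ _ hVpos hp
    (by nlinarith) hVp hVs hγ hβ hrnl0 hrnl1 (by linarith) hNy0 (hP0 g) hNf hx
end

section
/- Let G(x,u) = A x + B u + f(x,u) with ‖f(x,u)‖ ≤ β(‖x‖² + ‖u‖²) for ‖x‖ + ‖u‖ ≤ r_nl; let γ ∈ (0,1], Q ⪰ I, R ⪰ I, and K be such that √γ·(A+BK) is stable with Lyapunov solution P. Define the averaged nonlinear cost J_nl(K | γ, r) := (d/r²) · E_{x₀ ~ Unif(r·S^{d−1})}[ J_nl(K | γ, x₀) ], where J_nl(K | γ, x₀) := Σ_{t=0}^∞ x_tᵀ(Q + KᵀRK)x_t along x_{t+1} = √γ·G(x_t, K x_t) and S^{d−1} is the unit sphere in ℝ^d. If r ≤ r_nl / (2 β ‖P‖_op²), then | J_nl(K | γ, r) − tr(P) | ≤ 8 d β ‖P‖_op⁴ · r. -/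
open Matrix

open RealInnerProductSpace MeasureTheory

/-- The damped nonlinear trajectory `x_{t+1} = √γ · G(x_t, K x_t)` started at `x0`. -/
noncomputable def nlTraj {d m : ℕ}
    (G : EuclideanSpace ℝ (Fin d) × EuclideanSpace ℝ (Fin m) → EuclideanSpace ℝ (Fin d))
    (γ : ℝ) (K : Matrix (Fin m) (Fin d) ℝ) (x0 : EuclideanSpace ℝ (Fin d)) :
    ℕ → EuclideanSpace ℝ (Fin d)
  | 0 => x0
  | t + 1 =>
      Real.sqrt γ • G (nlTraj G γ K x0 t, Matrix.toEuclideanLin K (nlTraj G γ K x0 t))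

/-- The nonlinear cost of the controller `K` from initial state `x0`. -/
noncomputable def Jnl {d m : ℕ}
    (G : EuclideanSpace ℝ (Fin d) × EuclideanSpace ℝ (Fin m) → EuclideanSpace ℝ (Fin d))
    (Q : Matrix (Fin d) (Fin d) ℝ) (R : Matrix (Fin m) (Fin m) ℝ)
    (K : Matrix (Fin m) (Fin d) ℝ) (γ : ℝ) (x0 : EuclideanSpace ℝ (Fin d)) : ℝ :=
  ∑' t : ℕ, ⟪nlTraj G γ K x0 t,
      Matrix.toEuclideanLin (Q + Kᵀ * R * K) (nlTraj G γ K x0 t)⟫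


section stab
open scoped Matrix.Norms.Frobenius

lemma stable_pow_bound {d : ℕ} (M : Matrix (Fin d) (Fin d) ℝ) (h : IsStable M) [NeZero d] :
    ∃ c : ℝ, 0 ≤ c ∧ c < 1 ∧ ∀ᶠ t in Filter.atTop, ‖M ^ t‖ ≤ c ^ t := by
  set N : Matrix (Fin d) (Fin d) ℂ := M.map Complex.ofReal with hN
  have : CompleteSpace (Matrix (Fin d) (Fin d) ℂ) := FiniteDimensional.complete ℂ _
  have h1 : spectralRadius ℂ N < ((1 : NNReal) : ENNReal) := by
    apply spectrum.spectralRadius_lt_of_forall_lt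
    intro k hk
    have := h k hk
    exact_mod_cast this
  obtain ⟨c, hc1, hc2⟩ := ENNReal.lt_iff_exists_nnreal_btwn.1 h1
  have h2 := spectrum.pow_nnnorm_pow_one_div_tendsto_nhds_spectralRadius N
  have h3 := h2.eventually (gt_mem_nhds hc1)
  refine ⟨c, c.2, by exact_mod_cast hc2, ?_⟩
  filter_upwards [h3, Filter.eventually_gt_atTop 0] with t ht ht0
  have h4 : (‖N ^ t‖₊ : ENNReal) ≤ (c : ENNReal) ^ t := by
    have := ENNReal.rpow_le_rpow ht.le (Nat.cast_nonneg (α := ℝ) t)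
    rw [← ENNReal.rpow_mul, one_div, inv_mul_cancel₀ (by positivity), ENNReal.rpow_one,
      ENNReal.rpow_natCast] at this
    exact this
  have h5 : ‖N ^ t‖ ≤ (c : ℝ) ^ t := by exact_mod_cast h4
  have h6 : N ^ t = (M ^ t).map Complex.ofReal := by
    have := map_pow (Complex.ofRealHom.mapMatrix (m := Fin d)) M t
    exact this.symm
  rw [h6, Matrix.frobenius_norm_map_eq _ _ (fun a => by simp)] at h5
  exact h5

lemma stable_summable {d : ℕ} (M S : Matrix (Fin d) (Fin d) ℝ) (h : IsStable M) [NeZero d] :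
    Summable fun t : ℕ => (M ^ t)ᵀ * S * M ^ t := by
  obtain ⟨c, h0, h1, h2⟩ := stable_pow_bound M h
  have h3 : Summable fun t : ℕ => ‖S‖ * (c ^ 2) ^ t :=
    (summable_geometric_of_lt_one (by positivity) (by nlinarith)).mul_left _
  have : CompleteSpace (Matrix (Fin d) (Fin d) ℝ) := FiniteDimensional.complete ℝ _
  refine Summable.of_norm_bounded_eventually_nat h3 ?_
  filter_upwards [h2] with t ht
  calc ‖(M ^ t)ᵀ * S * M ^ t‖ ≤ ‖(M ^ t)ᵀ * S‖ * ‖M ^ t‖ := norm_mul_le _ _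
    _ ≤ ‖(M ^ t)ᵀ‖ * ‖S‖ * ‖M ^ t‖ := by gcongr; exact norm_mul_le _ _
    _ = ‖(M ^ t)‖ * ‖S‖ * ‖M ^ t‖ := by rw [Matrix.frobenius_norm_transpose]
    _ ≤ c ^ t * ‖S‖ * c ^ t := by gcongr
    _ = _ := by ring
end stab

lemma lyap_hasSum {d m : ℕ} [NeZero d] (A : Matrix (Fin d) (Fin d) ℝ) (B : Matrix (Fin d) (Fin m) ℝ)
    (Q : Matrix (Fin d) (Fin d) ℝ) (R : Matrix (Fin m) (Fin m) ℝ)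
    (K : Matrix (Fin m) (Fin d) ℝ) (γ : ℝ) (hγ : 0 < γ)
    (hstab : IsStable (Real.sqrt γ • (A + B * K))) :
    HasSum (fun t : ℕ => ((Real.sqrt γ • (A + B * K)) ^ t)ᵀ * (Q + Kᵀ * R * K) *
      (Real.sqrt γ • (A + B * K)) ^ t) (lyapP A B Q R K γ) := by
  have h := (stable_summable _ (Q + Kᵀ * R * K) hstab).hasSum
  convert! h using 1
  unfold lyapP
  congr 1
  ext1 t
  rw [smul_pow, Matrix.transpose_smul, Matrix.smul_mul, Matrix.smul_mul, Matrix.mul_smul, smul_smul,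
    ← mul_pow, Real.mul_self_sqrt hγ.le]

lemma inner_transpose {p q : ℕ} (M : Matrix (Fin p) (Fin q) ℝ) (x : EuclideanSpace ℝ (Fin q))
    (y : EuclideanSpace ℝ (Fin p)) :
    ⟪x, Matrix.toEuclideanLin Mᵀ y⟫ = ⟪Matrix.toEuclideanLin M x, y⟫ := by
  have := Matrix.toEuclideanLin_conjTranspose_eq_adjoint M
  rw [Matrix.conjTranspose_eq_transpose_of_trivial] at this
  rw [this, LinearMap.adjoint_inner_right]

lemma tel_mul {p q s : ℕ} (M : Matrix (Fin p) (Fin q) ℝ) (N : Matrix (Fin q) (Fin s) ℝ)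
    (x : EuclideanSpace ℝ (Fin s)) :
    Matrix.toEuclideanLin (M * N) x = Matrix.toEuclideanLin M (Matrix.toEuclideanLin N x) := by
  simp [Matrix.toEuclideanLin_apply]

lemma psd_inner {p : ℕ} (M : Matrix (Fin p) (Fin p) ℝ) (h : (M - 1).PosSemidef)
    (x : EuclideanSpace ℝ (Fin p)) : ‖x‖ ^ 2 ≤ ⟪x, Matrix.toEuclideanLin M x⟫ := by
  have := (Matrix.isPositive_toEuclideanLin_iff.2 h).inner_nonneg_right x
  rw [map_sub, LinearMap.sub_apply, inner_sub_right] at this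
  have h1 : Matrix.toEuclideanLin (1 : Matrix (Fin p) (Fin p) ℝ) x = x := by
    simp [Matrix.toEuclideanLin_apply]
  rw [h1, real_inner_self_eq_norm_sq] at this
  linarith

lemma step_bound {V q W Vn b v p β r : ℝ} (hW : V = q + W) (hVn : Vn = W + 2 * b + v)
    (hb : b ^ 2 ≤ W * v) (hW0 : 0 ≤ W) (hv0 : 0 ≤ v) (hv : v ≤ p * (β * q) ^ 2)
    (hV : V ≤ p * r ^ 2) (hVq : V ≤ p * q) (hq : 0 ≤ q) (hp : 1 ≤ p) (hβ : 1 ≤ β) (hr : 0 < r)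
    (hs : 2 * β * p ^ 2 * r ≤ 1) :
    |Vn - (V - q)| ≤ q * (β * r * (2 * p - 1 / 2)) := by
  have hW1 : W ≤ r ^ 2 * (p - 1) := by
    have : p * W ≤ p * (r ^ 2 * (p - 1)) := by
      nlinarith
    exact le_of_mul_le_mul_left this (by linarith)
  have hb2 : b ^ 2 ≤ (r * β * q * (p - 1 / 2)) ^ 2 := by
    calc b ^ 2 ≤ W * v := hb
      _ ≤ (r ^ 2 * (p - 1)) * (p * (β * q) ^ 2) := by gcongr
      _ = (r * β * q) ^ 2 * (p ^ 2 - p) := by ring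
      _ ≤ (r * β * q) ^ 2 * (p - 1 / 2) ^ 2 := by gcongr; nlinarith
      _ = _ := by ring
  have hb3 : |b| ≤ r * β * q * (p - 1 / 2) :=
    abs_le_of_sq_le_sq hb2 (by have : 0 ≤ p - 1/2 := by linarith
                               positivity)
  have hq2 : q ≤ p * r ^ 2 := by linarith
  have hv2 : v ≤ q * β * r * (1 / 2) := by
    calc v ≤ p * (β * q) ^ 2 := hv
      _ = (p * β ^ 2 * q) * q := by ring
      _ ≤ (p * β ^ 2 * q) * (p * r ^ 2) := by gcongr
      _ = (q * β * r) * ((2 * β * p ^ 2 * r) / 2) := by ring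
      _ ≤ (q * β * r) * (1 / 2) := by gcongr
  have hb4 := abs_le.1 hb3
  rw [abs_le]
  constructor <;> nlinarith

lemma seq_bound {V q : ℕ → ℝ} {p β r : ℝ} (hp : 1 ≤ p) (hβ : 1 ≤ β) (hr : 0 < r)
    (hs : 2 * β * p ^ 2 * r ≤ 1) (hq : ∀ t, 0 ≤ q t) (hV0 : ∀ t, 0 ≤ V t)
    (hVq : ∀ t, V t ≤ p * q t) (h0 : V 0 ≤ p * r ^ 2)
    (hstep : ∀ t, V t ≤ p * r ^ 2 →
      |V (t + 1) - (V t - q t)| ≤ q t * (β * r * (2 * p - 1 / 2))) :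
    Summable q ∧ |(∑' t, q t) - V 0| ≤ 8 * β * p ^ 4 * r ^ 3 := by
  set c := β * r * (2 * p - 1 / 2) with hc
  have hβr : 0 < β * r := by positivity
  have hc34 : c ≤ 3 / 4 := by
    have h1 : c * (4 * p ^ 2) ≤ 3 / 4 * (4 * p ^ 2) := by
      have : c * (4 * p ^ 2) = (2 * β * p ^ 2 * r) * (4 * p - 1) := by rw [hc]; ring
      rw [this]
      nlinarith
    exact le_of_mul_le_mul_right h1 (by positivity)
  have hc0 : 0 ≤ c := by
    have : 0 ≤ 2 * p - 1/2 := by linarith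
    positivity
  have hVb : ∀ t, V t ≤ p * r ^ 2 := by
    intro t
    induction t with
    | zero => exact h0
    | succ t ih =>
      have := (abs_le.1 (hstep t ih)).2
      nlinarith [hq t]
  have hst := fun t => abs_le.1 (hstep t (hVb t))
  have hpart : ∀ T, ∑ t ∈ Finset.range T, q t ≤ 4 * (V 0 - V T) := by
    intro T
    induction T with
    | zero => simp
    | succ T ih =>
      rw [Finset.sum_range_succ]
      nlinarith [hq T, (hst T).2]
  have hpart2 : ∀ T, ∑ t ∈ Finset.range T, q t ≤ 4 * (p * r ^ 2) := by
    intro T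
    linarith [hpart T, hV0 T]
  have hsum : Summable q := summable_of_sum_range_le hq hpart2
  have herr : ∀ T, |(∑ t ∈ Finset.range T, q t) + V T - V 0| ≤ c * ∑ t ∈ Finset.range T, q t := by
    intro T
    induction T with
    | zero => simp
    | succ T ih =>
      rw [Finset.sum_range_succ]
      have h1 := abs_le.1 ih
      have h2 := hst T
      rw [abs_le]
      constructor <;> nlinarith
  have hq0 := hsum.tendsto_atTop_zero
  have hVt : Filter.Tendsto V Filter.atTop (nhds 0) := by
    refine squeeze_zero hV0 hVq ?_
    simpa using hq0.const_mul p
  have hl : Filter.Tendsto (fun T => |(∑ t ∈ Finset.range T, q t) + V T - V 0|) Filter.atTop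
      (nhds (|(∑' t, q t) + 0 - V 0|)) :=
    ((hsum.hasSum.tendsto_sum_nat.add hVt).sub_const _).abs
  refine ⟨hsum, ?_⟩
  rw [add_zero] at hl
  have := le_of_tendsto' hl (fun T => (herr T).trans
    (mul_le_mul_of_nonneg_left (hpart2 T) hc0))
  refine this.trans ?_
  have h3 : 8 * p ^ 2 - 2 * p ≤ 8 * p ^ 4 := by nlinarith [mul_nonneg (sq_nonneg p) (sub_nonneg.2 hp), sq_nonneg (p^2 - 1), mul_self_nonneg p, pow_le_pow_right₀ hp (show 2 ≤ 4 by norm_num)]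
  calc c * (4 * (p * r ^ 2)) = (β * r ^ 3) * (8 * p ^ 2 - 2 * p) := by rw [hc]; ring
    _ ≤ (β * r ^ 3) * (8 * p ^ 4) := by gcongr
    _ = _ := by ring

/-- second moments of a rotation invariant measure on the sphere -/
lemma sphere_moment {d : ℕ} [NeZero d] (P : Matrix (Fin d) (Fin d) ℝ) (r : ℝ)
    (μ : Measure (EuclideanSpace ℝ (Fin d))) [IsProbabilityMeasure μ]
    (hsupp : ∀ᵐ x ∂μ, ‖x‖ = r)
    (hinv : ∀ O : EuclideanSpace ℝ (Fin d) ≃ₗᵢ[ℝ] EuclideanSpace ℝ (Fin d),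
      μ.map O = μ) :
    Integrable (fun x => ⟪x, Matrix.toEuclideanLin P x⟫) μ ∧
    ∫ x, ⟪x, Matrix.toEuclideanLin P x⟫ ∂μ = r ^ 2 / d * P.trace := by
  have hint : ∀ i j, Integrable (fun x : EuclideanSpace ℝ (Fin d) => x i * x j) μ := by
    intro i j
    refine Integrable.of_bound (C := r * r) (by fun_prop) ?_
    filter_upwards [hsupp] with x hx
    rw [norm_mul, ← hx]
    gcongr <;> exact PiLp.norm_apply_le _ _
  have hinv' : ∀ (O : EuclideanSpace ℝ (Fin d) ≃ₗᵢ[ℝ] EuclideanSpace ℝ (Fin d))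
      (g : EuclideanSpace ℝ (Fin d) → ℝ), ∫ x, g (O x) ∂μ = ∫ x, g x ∂μ := by
    intro O g
    conv_rhs => rw [← hinv O]
    exact (O.toHomeomorph.measurableEmbedding.integral_map g).symm
  have hoff : ∀ i j, i ≠ j → ∫ x : EuclideanSpace ℝ (Fin d), x i * x j ∂μ = 0 := by
    intro i j hij
    have := hinv' (LinearIsometryEquiv.piLpCongrRight 2
      (fun k => if k = i then LinearIsometryEquiv.neg ℝ else LinearIsometryEquiv.refl ℝ ℝ))
      (fun x => x i * x j)
    simp [LinearIsometryEquiv.piLpCongrRight_apply, hij.symm, integral_neg] at this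
    linarith
  have hdiag : ∀ i j, ∫ x : EuclideanSpace ℝ (Fin d), x i * x i ∂μ = ∫ x, x j * x j ∂μ := by
    intro i j
    have := hinv' (LinearIsometryEquiv.piLpCongrLeft 2 ℝ ℝ (Equiv.swap i j))
      (fun x => x i * x i)
    simp [LinearIsometryEquiv.piLpCongrLeft_apply] at this
    exact this.symm
  have hd : (d : ℝ) ≠ 0 := Nat.cast_ne_zero.2 (NeZero.ne d)
  have hval : ∀ i, ∫ x : EuclideanSpace ℝ (Fin d), x i * x i ∂μ = r ^ 2 / d := by
    intro i
    have h1 : ∫ x : EuclideanSpace ℝ (Fin d), ∑ j, x j * x j ∂μ = r ^ 2 := by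
      have : ∀ᵐ x : EuclideanSpace ℝ (Fin d) ∂μ, ∑ j, x j * x j = r ^ 2 := by
        filter_upwards [hsupp] with x hx
        rw [← hx, EuclideanSpace.real_norm_sq_eq]
        simp [pow_two]
      rw [integral_congr_ae this]
      simp
    rw [integral_finsetSum _ (fun j _ => hint j j)] at h1
    rw [Finset.sum_congr rfl (fun j _ => hdiag j i)] at h1
    simp at h1
    rw [eq_div_iff hd, mul_comm]
    exact h1
  have hexp : ∀ x : EuclideanSpace ℝ (Fin d), ⟪x, Matrix.toEuclideanLin P x⟫ =
      ∑ i, ∑ j, P i j * (x i * x j) := by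
    intro x
    simp only [PiLp.inner_apply, Matrix.ofLp_toEuclideanLin_apply, Matrix.mulVec, dotProduct]
    refine Finset.sum_congr rfl fun i _ => ?_
    simp [Finset.sum_mul, Finset.mul_sum]
    exact Finset.sum_congr rfl fun j _ => by ring
  simp_rw [hexp]
  have hi1 : ∀ i ∈ Finset.univ, Integrable (fun x : EuclideanSpace ℝ (Fin d) => ∑ j, P i j * (x i * x j)) μ :=
    fun i _ => integrable_finsetSum _ fun j _ => (hint i j).const_mul _
  refine ⟨integrable_finsetSum _ hi1, ?_⟩
  rw [integral_finsetSum _ hi1, Matrix.trace, Finset.mul_sum]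
  refine Finset.sum_congr rfl fun i _ => ?_
  rw [integral_finsetSum _ fun j _ => (hint i j).const_mul _]
  rw [Finset.sum_eq_single i]
  · rw [integral_const_mul, hval]; simp [mul_comm]
  · intro j _ hj
    rw [integral_const_mul, hoff i j hj.symm, mul_zero]
  · simp

lemma semi_cs {E : Type*} [NormedAddCommGroup E] [InnerProductSpace ℝ E] (T : E →ₗ[ℝ] E)
    (hsym : ∀ x y, ⟪x, T y⟫ = ⟪y, T x⟫) (hpos : ∀ x, 0 ≤ ⟪x, T x⟫) (a b : E) :
    ⟪a, T b⟫ ^ 2 ≤ ⟪a, T a⟫ * ⟪b, T b⟫ := by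
  have h : ∀ s : ℝ, 0 ≤ ⟪b, T b⟫ * (s * s) + (2 * ⟪a, T b⟫) * s + ⟪a, T a⟫ := by
    intro s
    have := hpos (a + s • b)
    simp only [map_add, map_smul, inner_add_left, inner_add_right, inner_smul_left,
      inner_smul_right, hsym b a] at this
    simp at this
    linarith
  have := discrim_le_zero h
  unfold discrim at this
  linarith

/-- Averaged similarity of costs: for `μ` the uniform (rotation-invariant) probability
measure on the sphere of radius `r`, with `r ≤ r_nl/(2β‖P‖²)`, the averaged nonlinear cost
`(d/r²)·E[Jnl]` differs from `tr P` by at most `8dβ‖P‖⁴r`. -/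
theorem averaged_similarity_of_costs {d m : ℕ}
    (G : EuclideanSpace ℝ (Fin d) × EuclideanSpace ℝ (Fin m) → EuclideanSpace ℝ (Fin d))
    (hGcont : Continuous G)
    (A : Matrix (Fin d) (Fin d) ℝ) (B : Matrix (Fin d) (Fin m) ℝ)
    (Q : Matrix (Fin d) (Fin d) ℝ) (R : Matrix (Fin m) (Fin m) ℝ)
    (K : Matrix (Fin m) (Fin d) ℝ)
    (β rnl : ℝ) (hβ : 1 ≤ β) (hrnl0 : 0 < rnl) (hrnl1 : rnl ≤ 1)
    (hf : ∀ (x : EuclideanSpace ℝ (Fin d)) (u : EuclideanSpace ℝ (Fin m)),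
      ‖x‖ + ‖u‖ ≤ rnl →
      ‖G (x, u) - Matrix.toEuclideanLin A x - Matrix.toEuclideanLin B u‖
        ≤ β * (‖x‖ ^ 2 + ‖u‖ ^ 2))
    (γ : ℝ) (hγ : γ ∈ Set.Ioc (0 : ℝ) 1)
    (hQ : (Q - 1).PosSemidef) (hR : (R - 1).PosSemidef)
    (hstab : IsStable (Real.sqrt γ • (A + B * K)))
    (r : ℝ) (hr0 : 0 < r)
    (hr : r ≤ rnl / (2 * β * opNorm (lyapP A B Q R K γ) ^ 2))
    (μ : Measure (EuclideanSpace ℝ (Fin d))) [IsProbabilityMeasure μ]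
    (hsupp : μ (Metric.sphere (0 : EuclideanSpace ℝ (Fin d)) r)ᶜ = 0)
    (hinv : ∀ O : EuclideanSpace ℝ (Fin d) ≃ₗᵢ[ℝ] EuclideanSpace ℝ (Fin d),
      μ.map O = μ) :
    |(d : ℝ) / r ^ 2 * (∫ x0, Jnl G Q R K γ x0 ∂μ) - (lyapP A B Q R K γ).trace|
      ≤ 8 * d * β * opNorm (lyapP A B Q R K γ) ^ 4 * r := by
  obtain ⟨hγ0, hγ1⟩ := hγ
  have hae : ∀ᵐ x ∂μ, ‖x‖ = r := by
    rw [ae_iff]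
    convert! hsupp using 2
    ext x
    simp
  obtain ⟨z, hz⟩ := hae.exists
  have : NeZero d := by
    constructor
    rintro rfl
    have : z = 0 := Subsingleton.elim _ _
    rw [this, norm_zero] at hz
    linarith
  set P := lyapP A B Q R K γ with hP
  set S := Q + Kᵀ * R * K with hS
  set M := Real.sqrt γ • (A + B * K) with hM
  set p := opNorm P with hp
  have hsum : HasSum (fun t : ℕ => (M ^ t)ᵀ * S * M ^ t) P := lyap_hasSum A B Q R K γ hγ0 hstab
  set V : EuclideanSpace ℝ (Fin d) → ℝ := fun x => ⟪x, Matrix.toEuclideanLin P x⟫ with hVdef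
  set q : EuclideanSpace ℝ (Fin d) → ℝ := fun x => ⟪x, Matrix.toEuclideanLin S x⟫ with hqdef
  -- lower bound on q
  have hqlow : ∀ x, ‖x‖ ^ 2 + ‖Matrix.toEuclideanLin K x‖ ^ 2 ≤ q x := by
    intro x
    have h1 := psd_inner Q hQ x
    have h2 := psd_inner R hR (Matrix.toEuclideanLin K x)
    have h3 : q x = ⟪x, Matrix.toEuclideanLin Q x⟫ +
        ⟪Matrix.toEuclideanLin K x, Matrix.toEuclideanLin R (Matrix.toEuclideanLin K x)⟫ := by
      simp only [hqdef, hS]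
      rw [map_add, LinearMap.add_apply, inner_add_right, tel_mul, tel_mul, inner_transpose]
    linarith
  have hq0 : ∀ x, 0 ≤ q x := fun x => le_trans (by positivity) (hqlow x)
  have hVsum : ∀ x, HasSum (fun t : ℕ => q (Matrix.toEuclideanLin (M ^ t) x)) (V x) := by
    intro x
    let L : Matrix (Fin d) (Fin d) ℝ →ₗ[ℝ] ℝ :=
      { toFun := fun N => ⟪x, Matrix.toEuclideanLin N x⟫
        map_add' := fun a b => by rw [map_add, LinearMap.add_apply, inner_add_right]
        map_smul' := fun a b => by
          rw [map_smul, LinearMap.smul_apply, inner_smul_right]; rfl }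
    have hL : Continuous L := L.continuous_of_finiteDimensional
    have := hsum.map L hL
    convert! this using 1
    ext t
    change _ = ⟪x, Matrix.toEuclideanLin ((M ^ t)ᵀ * S * M ^ t) x⟫
    rw [tel_mul, tel_mul, inner_transpose]
  have hlyap : ∀ x, V x = q x + V (Matrix.toEuclideanLin M x) := by
    intro x
    have h1 := (hVsum x).tsum_eq
    rw [(hVsum x).summable.tsum_eq_zero_add] at h1
    rw [← h1, ← (hVsum (Matrix.toEuclideanLin M x)).tsum_eq]
    congr 1
    · rw [pow_zero]
      simp [Matrix.toLpLin_apply]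
    · congr 1
      ext t
      rw [pow_succ, tel_mul]
  have hV0 : ∀ x, 0 ≤ V x := fun x => (hVsum x).nonneg fun t => hq0 _
  have hqV : ∀ x, q x ≤ V x := fun x => by linarith [hlyap x, hV0 (Matrix.toEuclideanLin M x)]
  have hpV : ∀ x, V x ≤ p * ‖x‖ ^ 2 := by
    intro x
    calc V x ≤ ‖x‖ * ‖Matrix.toEuclideanLin P x‖ := real_inner_le_norm _ _
      _ ≤ ‖x‖ * (p * ‖x‖) := by
        gcongr
        exact (LinearMap.toContinuousLinearMap (Matrix.toEuclideanLin P)).le_opNorm x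
      _ = _ := by ring
  have hp1 : 1 ≤ p := by
    have h1 := hqlow z
    have h2 := hqV z
    have h3 := hpV z
    rw [hz] at *
    have : 1 * r ^ 2 ≤ p * r ^ 2 := by
      nlinarith [sq_nonneg ‖Matrix.toEuclideanLin K z‖]
    exact le_of_mul_le_mul_right this (by positivity)
  have hVq : ∀ x, V x ≤ p * q x := by
    intro x
    refine (hpV x).trans ?_
    gcongr
    nlinarith [hqlow x, sq_nonneg ‖Matrix.toEuclideanLin K x‖]
  have hST : Sᵀ = S := by
    have h1 : Qᵀ = Q := by
      have := hQ.isHermitian.eq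
      simpa [Matrix.conjTranspose_eq_transpose_of_trivial] using this
    have h2 : Rᵀ = R := by
      have := hR.isHermitian.eq
      simpa [Matrix.conjTranspose_eq_transpose_of_trivial] using this
    simp [hS, Matrix.transpose_mul, h1, h2, Matrix.mul_assoc]
  have hPT : Pᵀ = P := by
    have h1 := hsum.matrix_transpose
    refine h1.unique ?_
    convert! hsum using 2 with t
    simp [Matrix.transpose_mul, hST, Matrix.mul_assoc]
  have hsym : ∀ x y, ⟪x, Matrix.toEuclideanLin P y⟫ = ⟪y, Matrix.toEuclideanLin P x⟫ := by
    intro x y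
    conv_lhs => rw [← hPT]
    rw [inner_transpose, real_inner_comm]
  have hβp : 0 < 2 * β * p ^ 2 := by positivity
  have hr' : 2 * β * p ^ 2 * r ≤ rnl := by
    rw [le_div_iff₀ hβp] at hr
    linarith
  have hs1 : 2 * β * p ^ 2 * r ≤ 1 := hr'.trans hrnl1
  -- one step
  have hstep : ∀ x, V x ≤ p * r ^ 2 →
      |V (Real.sqrt γ • G (x, Matrix.toEuclideanLin K x)) - (V x - q x)|
        ≤ q x * (β * r * (2 * p - 1 / 2)) := by
    intro x hx
    set u := Matrix.toEuclideanLin K x with hu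
    have hsmall : ‖x‖ + ‖u‖ ≤ rnl := by
      have h1 : ‖x‖ ^ 2 + ‖u‖ ^ 2 ≤ p * r ^ 2 := ((hqlow x).trans (hqV x)).trans hx
      have h2 : (‖x‖ + ‖u‖) ^ 2 ≤ (2 * p * r) ^ 2 := by
        nlinarith [sq_nonneg (‖x‖ - ‖u‖), mul_nonneg (sub_nonneg.2 hp1) (sq_nonneg r),
          mul_nonneg (mul_nonneg (sub_nonneg.2 hp1) (sub_nonneg.2 hp1)) (sq_nonneg r), sq_nonneg r]
      have h3 : ‖x‖ + ‖u‖ ≤ 2 * p * r := by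
        apply le_of_sq_le_sq h2 (by positivity)
      have h4 : 2 * p * r ≤ 2 * β * p ^ 2 * r := by
        have : p * 1 ≤ p * (β * p) := by
          gcongr; nlinarith
        nlinarith
      linarith
    set f := G (x, u) - Matrix.toEuclideanLin A x - Matrix.toEuclideanLin B u with hfdef
    have hfn : ‖f‖ ≤ β * q x := (hf x u hsmall).trans (by gcongr; exact hqlow x)
    set w := Matrix.toEuclideanLin M x with hw
    set g := Real.sqrt γ • f with hg
    have hgn : ‖g‖ ≤ β * q x := by
      rw [hg, norm_smul, Real.norm_of_nonneg (Real.sqrt_nonneg _)]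
      have : Real.sqrt γ ≤ 1 := Real.sqrt_le_one.2 hγ1
      nlinarith [norm_nonneg f]
    have hnext : Real.sqrt γ • G (x, u) = w + g := by
      rw [hg, hfdef, hw, hM, map_smul, LinearMap.smul_apply, ← smul_add, map_add,
        LinearMap.add_apply, tel_mul]
      congr 1
      abel
    rw [hnext]
    refine step_bound (W := V w) (b := ⟪w, Matrix.toEuclideanLin P g⟫) (v := V g) (hlyap x) ?_
      (semi_cs _ hsym hV0 w g) (hV0 _) (hV0 _) ?_ hx (hVq x) (hq0 x) hp1 hβ hr0 hs1
    · simp only [hVdef, map_add, inner_add_left, inner_add_right, hsym g w]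
      ring
    · refine (hpV g).trans ?_
      gcongr
  have hmain : ∀ x, ‖x‖ = r → Summable (fun t => q (nlTraj G γ K x t)) ∧
      |Jnl G Q R K γ x - V x| ≤ 8 * β * p ^ 4 * r ^ 3 := by
    intro x hx
    exact seq_bound (V := fun t => V (nlTraj G γ K x t)) (q := fun t => q (nlTraj G γ K x t))
      hp1 hβ hr0 hs1 (fun t => hq0 _) (fun t => hV0 _) (fun t => hVq _)
      (by rw [← hx]; exact hpV x) (fun t ht => hstep _ ht)
  obtain ⟨hVint, hVval⟩ := sphere_moment P r μ hae hinv
  have hcontK : Continuous (Matrix.toEuclideanLin K) := LinearMap.continuous_of_finiteDimensional _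
  have hcontS : Continuous (Matrix.toEuclideanLin S) := LinearMap.continuous_of_finiteDimensional _
  have htraj : ∀ t, Continuous (fun x => nlTraj G γ K x t) := by
    intro t
    induction t with
    | zero => exact continuous_id
    | succ t ih =>
      exact (hGcont.comp (ih.prodMk (hcontK.comp ih))).const_smul (Real.sqrt γ)
  have hqc : ∀ t, Continuous (fun x => q (nlTraj G γ K x t)) := fun t =>
    (htraj t).inner (hcontS.comp (htraj t))
  have hJm : AEStronglyMeasurable (Jnl G Q R K γ) μ := by
    refine aestronglyMeasurable_of_tendsto_ae Filter.atTop
      (f := fun (T : ℕ) x => ∑ t ∈ Finset.range T, q (nlTraj G γ K x t)) ?_ ?_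
    · intro T
      exact (continuous_finsetSum _ fun t _ => hqc t).aestronglyMeasurable
    · filter_upwards [hae] with x hx
      exact (hmain x hx).1.hasSum.tendsto_sum_nat
  have hbd : ∀ᵐ x ∂μ, ‖Jnl G Q R K γ x - V x‖ ≤ 8 * β * p ^ 4 * r ^ 3 := by
    filter_upwards [hae] with x hx
    exact (hmain x hx).2
  have hDint : Integrable (fun x => Jnl G Q R K γ x - V x) μ :=
    Integrable.of_bound (hJm.sub hVint.aestronglyMeasurable) _ hbd
  have hJint : ∫ x, Jnl G Q R K γ x ∂μ = ∫ x, (Jnl G Q R K γ x - V x) ∂μ + r ^ 2 / d * P.trace := by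
    rw [← hVval, ← integral_add hDint hVint]
    simp [hVdef]
  have hD := norm_integral_le_of_norm_le_const hbd
  rw [Real.norm_eq_abs, probReal_univ, mul_one] at hD
  have hd : (0 : ℝ) < d := Nat.cast_pos.2 (NeZero.pos d)
  rw [hJint]
  have : (d : ℝ) / r ^ 2 * (∫ x, (Jnl G Q R K γ x - V x) ∂μ + r ^ 2 / d * P.trace) - P.trace =
      (d : ℝ) / r ^ 2 * ∫ x, (Jnl G Q R K γ x - V x) ∂μ := by
    field_simp
    ring
  rw [this, abs_mul, abs_of_pos (by positivity)]
  calc (d : ℝ) / r ^ 2 * |∫ x, (Jnl G Q R K γ x - V x) ∂μ|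
      ≤ (d : ℝ) / r ^ 2 * (8 * β * p ^ 4 * r ^ 3) := by gcongr
    _ = _ := by field_simp
end
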